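/- arXiv:1807.02661 — 14 statements merged into one kernel-verified Lean document; each statement's English description precedes it below -/
import Mathlib

section
/- If lim_{V→∞} f'(V) = ∞, then lim_{V→∞} (f(2V) − 2f(V)) = ∞. In other words, L = ∞ implies M = ∞. -/
open Filter Set

/-- If lim_{V→∞} f'(V) = ∞, then lim_{V→∞} (f(2V) − 2f(V)) = ∞.
In other words, L = ∞ implies M = ∞. -/
theorem stmt_2 (f : ℝ → ℝ)
    (hf_even : ∀ x, f (-x) = f x)
    (hf_conv : StrictConvexOn ℝ Set.univ f)
    (hf_smooth : ContDiff ℝ 1 f)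
    (hf_pos : ∀ x, 0 < f x)
    (hL : Tendsto (deriv f) atTop atTop) :
    Tendsto (fun V : ℝ => f (2 * V) - 2 * f V) atTop atTop := by
  have hc := hf_conv.convexOn
  have hd : Differentiable ℝ f := hf_smooth.differentiable (by norm_num)
  have h1 : Tendsto (fun V => deriv f V + (-f 1)) atTop atTop :=
    tendsto_atTop_add_const_right _ _ hL
  refine tendsto_atTop_mono' _ ?_ h1
  filter_upwards [eventually_gt_atTop (1 : ℝ)] with V hV
  have ha := hc.slope_le_deriv (mem_univ 1) (mem_univ V) hV (hd V)
  have hb := hc.deriv_le_slope (mem_univ V) (mem_univ (2 * V)) (by linarith) (hd V)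
  rw [slope_def_field, div_le_iff₀ (by linarith)] at ha
  rw [slope_def_field, le_div_iff₀ (by linarith)] at hb
  nlinarith
end

section
/- Suppose L = lim_{V→∞} f'(V) is finite. Then for each fixed V₁ > 0, the equilibrium point Ṽ(V₁, V₂) converges to V*(V₁) as V₂ → ∞. -/
open Filter Set

/-- Suppose L = lim_{V→∞} f'(V) is finite. Then for each fixed V₁ > 0,
the equilibrium point Ṽ(V₁, V₂) converges to V*(V₁) as V₂ → ∞. -/
theorem stmt_5 (f : ℝ → ℝ)
    (hf_even : ∀ x, f (-x) = f x)
    (hf_conv : StrictConvexOn ℝ Set.univ f)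
    (hf_smooth : ContDiff ℝ 1 f)
    (hf_pos : ∀ x, 0 < f x)
    (L : ℝ) (hL : Tendsto (deriv f) atTop (nhds L))
    (Vt : ℝ → ℝ → ℝ)
    (hVt : ∀ V₁ V₂ : ℝ, 0 < V₁ → 0 < V₂ →
      deriv f (Vt V₁ V₂) + deriv f (Vt V₁ V₂ + V₁) + deriv f (Vt V₁ V₂ + V₁ + V₂) = 0)
    (Vs : ℝ → ℝ)
    (hVs : ∀ V₁ : ℝ, 0 < V₁ → deriv f (Vs V₁) + deriv f (Vs V₁ + V₁) = -L) :
    ∀ V₁ : ℝ, 0 < V₁ →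
      Tendsto (fun V₂ => Vt V₁ V₂) atTop (nhds (Vs V₁)) := by
  have hd : Differentiable ℝ f := hf_smooth.differentiable (by norm_num)
  have hg : StrictMono (deriv f) := by
    have h := hf_conv.strictMonoOn_deriv (fun x _ => hd x)
    intro x y hxy
    exact h (mem_univ x) (mem_univ y) hxy
  have hle : ∀ x, deriv f x ≤ L := fun x => hg.monotone.ge_of_tendsto hL x
  intro V₁ h1
  have hs := hVs V₁ h1
  rw [tendsto_order]
  constructor
  · intro a ha
    filter_upwards [eventually_gt_atTop 0] with V₂ h2
    by_contra hcon
    have ht := hVt V₁ V₂ h1 h2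
    have e1 : deriv f (Vt V₁ V₂) < deriv f (Vs V₁) := hg (by linarith)
    have e2 : deriv f (Vt V₁ V₂ + V₁) < deriv f (Vs V₁ + V₁) := hg (by linarith)
    have e3 := hle (Vt V₁ V₂ + V₁ + V₂)
    linarith
  · intro b hb
    have k1 : deriv f (Vs V₁) < deriv f b := hg hb
    have k2 : deriv f (Vs V₁ + V₁) < deriv f (b + V₁) := hg (by linarith)
    have hT : Tendsto (fun V₂ => deriv f (b + V₁ + V₂)) atTop (nhds L) :=
      hL.comp (tendsto_atTop_add_const_left _ _ tendsto_id)
    have hev := hT.eventually_const_lt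
      (show -(deriv f b + deriv f (b + V₁)) < L by linarith)
    filter_upwards [eventually_gt_atTop 0, hev] with V₂ h2 h3
    by_contra hcon
    have hbt : b ≤ Vt V₁ V₂ := not_lt.mp hcon
    have ht := hVt V₁ V₂ h1 h2
    have e1 : deriv f b ≤ deriv f (Vt V₁ V₂) := hg.monotone hbt
    have e2 : deriv f (b + V₁) ≤ deriv f (Vt V₁ V₂ + V₁) := hg.monotone (by linarith)
    have e3 : deriv f (b + V₁ + V₂) ≤ deriv f (Vt V₁ V₂ + V₁ + V₂) :=
      hg.monotone (by linarith)
    linarith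
end

section
/- Suppose L = lim_{V→∞} f'(V) is finite. Then the function V₁ ↦ V*(V₁) is strictly decreasing on (0, ∞), V*(V₁) → −∞ as V₁ → ∞, and V*(V₁) + V₁ → 0 as V₁ → ∞. -/
open Filter Set

/-- Suppose L = lim_{V→∞} f'(V) is finite. Then the function V₁ ↦ V*(V₁)
is strictly decreasing on (0, ∞), V*(V₁) → −∞ as V₁ → ∞, and V*(V₁) + V₁ → 0 as
V₁ → ∞. -/
theorem stmt_6 (f : ℝ → ℝ)
    (hf_even : ∀ x, f (-x) = f x)
    (hf_conv : StrictConvexOn ℝ Set.univ f)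
    (hf_smooth : ContDiff ℝ 1 f)
    (hf_pos : ∀ x, 0 < f x)
    (L : ℝ) (hL : Tendsto (deriv f) atTop (nhds L))
    (Vs : ℝ → ℝ)
    (hVs : ∀ V₁ : ℝ, 0 < V₁ → deriv f (Vs V₁) + deriv f (Vs V₁ + V₁) = -L) :
    StrictAntiOn Vs (Set.Ioi (0 : ℝ)) ∧
    Tendsto Vs atTop atBot ∧
    Tendsto (fun V₁ => Vs V₁ + V₁) atTop (nhds 0) := by
  have hd : Differentiable ℝ f := hf_smooth.differentiable (by norm_num)
  have hmono : StrictMono (deriv f) := by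
    have h := hf_conv.strictMonoOn_deriv (fun x _ => hd x)
    exact strictMonoOn_univ.mp h
  have hodd : ∀ x, deriv f (-x) = -deriv f x := by
    intro x
    have h1 : (fun y => f (-y)) = f := funext hf_even
    have h2 := deriv_comp_neg f x
    rw [h1] at h2
    linarith
  have h0 : deriv f 0 = 0 := by
    have := hodd 0
    rw [neg_zero] at this
    linarith
  have hlt : ∀ x, deriv f x < L := fun x =>
    (hmono (lt_add_one x)).trans_le (hmono.monotone.ge_of_tendsto hL _)
  have hneg : ∀ V : ℝ, 0 < V → Vs V + V < 0 := by
    intro V hV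
    rw [← hmono.lt_iff_lt, h0]
    have h1 := hVs V hV
    have h2 := hlt (-(Vs V))
    rw [hodd] at h2
    linarith
  have hbot : Tendsto Vs atTop atBot := by
    refine tendsto_atBot_mono' atTop ?_ tendsto_neg_atTop_atBot
    filter_upwards [eventually_gt_atTop 0] with V hV
    have := hneg V hV
    linarith
  refine ⟨?_, hbot, ?_⟩
  · intro a ha b hb hab
    by_contra hcon
    push Not at hcon
    have h1 := hmono.monotone hcon
    have h2 : deriv f (Vs a + a) < deriv f (Vs b + b) := hmono (by linarith)
    have h3 := hVs a ha
    have h4 := hVs b hb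
    linarith
  · have hL' : Tendsto (fun V => deriv f (-(Vs V))) atTop (nhds L) :=
      hL.comp (tendsto_neg_atBot_atTop.comp hbot)
    rw [tendsto_order]
    constructor
    · intro a ha
      have hga : deriv f a < 0 := by
        rw [← h0]
        exact hmono ha
      have hev := hL'.eventually (lt_mem_nhds (show L + deriv f a / 2 < L by linarith))
      have hev2 := hL'.eventually (gt_mem_nhds (show L < L - deriv f a / 2 by linarith))
      filter_upwards [hev, hev2, eventually_gt_atTop 0] with V h1 h2 hV
      rw [← hmono.lt_iff_lt]
      have h3 := hVs V hV
      rw [hodd] at h1 h2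
      linarith
    · intro a ha
      filter_upwards [eventually_gt_atTop 0] with V hV
      exact (hneg V hV).trans ha
end

section
/- Suppose L = lim_{V→∞} f'(V) is finite and M = lim_{V→∞} (f(2V) − 2f(V)) is finite. Then for each fixed V₁ > 0, μ(V₁, V₂) converges as V₂ → ∞ to the finite value 2f(V₁/2) − f(V*(V₁)) − f(V*(V₁) + V₁) − V*(V₁)·L − M. -/
open Filter Set

/-- The perimeter difference μ(V₁,V₂) between the triple interval and the double
interval, expressed via the equilibrium point Ṽ = Vt V₁ V₂. -/
noncomputable def mu (f : ℝ → ℝ) (Vt : ℝ → ℝ → ℝ) (V₁ V₂ : ℝ) : ℝ :=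
  2 * f (V₁ / 2) + 2 * f ((V₁ + V₂) / 2)
    - f (Vt V₁ V₂) - f (Vt V₁ V₂ + V₁) - f (Vt V₁ V₂ + V₁ + V₂)

theorem tangent_aux (f : ℝ → ℝ) (hc : ConvexOn ℝ Set.univ f) (hd : Differentiable ℝ f)
    (x y : ℝ) : deriv f x * (y - x) ≤ f y - f x := by
  rcases lt_trichotomy x y with h | h | h
  · have := hc.deriv_le_slope (mem_univ x) (mem_univ y) h (hd x)
    rw [slope_def_field, le_div_iff₀ (by linarith)] at this
    exact this
  · subst h; simp
  · have := hc.slope_le_deriv (mem_univ y) (mem_univ x) h (hd x)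
    rw [slope_def_field, div_le_iff₀ (by linarith)] at this
    linarith

/-- Suppose L = lim_{V→∞} f'(V) is finite and
M = lim_{V→∞} (f(2V) − 2f(V)) is finite. Then for each fixed V₁ > 0, μ(V₁, V₂)
converges as V₂ → ∞ to the finite value
2f(V₁/2) − f(V*(V₁)) − f(V*(V₁) + V₁) − V*(V₁)·L − M. -/
theorem stmt_7 (f : ℝ → ℝ)
    (hf_even : ∀ x, f (-x) = f x)
    (hf_conv : StrictConvexOn ℝ Set.univ f)
    (hf_smooth : ContDiff ℝ 1 f)
    (hf_pos : ∀ x, 0 < f x)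
    (L : ℝ) (hL : Tendsto (deriv f) atTop (nhds L))
    (M : ℝ) (hM : Tendsto (fun V : ℝ => f (2 * V) - 2 * f V) atTop (nhds M))
    (Vt : ℝ → ℝ → ℝ)
    (hVt : ∀ V₁ V₂ : ℝ, 0 < V₁ → 0 < V₂ →
      deriv f (Vt V₁ V₂) + deriv f (Vt V₁ V₂ + V₁) + deriv f (Vt V₁ V₂ + V₁ + V₂) = 0)
    (Vs : ℝ → ℝ)
    (hVs : ∀ V₁ : ℝ, 0 < V₁ → deriv f (Vs V₁) + deriv f (Vs V₁ + V₁) = -L) :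
    ∀ V₁ : ℝ, 0 < V₁ →
      Tendsto (fun V₂ => mu f Vt V₁ V₂) atTop
        (nhds (2 * f (V₁ / 2) - f (Vs V₁) - f (Vs V₁ + V₁) - Vs V₁ * L - M)) := by
  intro V₁ hV₁
  have hd : Differentiable ℝ f := hf_smooth.differentiable (by norm_num)
  have hg : StrictMono (deriv f) := by
    intro x y hxy
    exact (hf_conv.strictMonoOn_deriv (fun x _ => hd x)) (mem_univ x) (mem_univ y) hxy
  have hgL : ∀ x, deriv f x < L := fun x =>
    (hg (lt_add_one x)).trans_le (hg.monotone.ge_of_tendsto hL _)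
  have hh : StrictMono (fun x => deriv f x + deriv f (x + V₁)) := by
    intro x y hxy
    exact add_lt_add (hg hxy) (hg (by linarith))
  have hlow : ∀ V₂, 0 < V₂ → Vs V₁ < Vt V₁ V₂ := by
    intro V₂ h2
    have h1 := hVt V₁ V₂ hV₁ h2
    have h3 := hVs V₁ hV₁
    have h4 := hgL (Vt V₁ V₂ + V₁ + V₂)
    refine hh.lt_iff_lt.1 ?_
    show deriv f (Vs V₁) + deriv f (Vs V₁ + V₁) < deriv f (Vt V₁ V₂) + deriv f (Vt V₁ V₂ + V₁)
    linarith
  have hW : Tendsto (fun V₂ : ℝ => V₁ + V₂) atTop atTop :=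
    tendsto_atTop_add_const_left _ _ tendsto_id
  have hWt : Tendsto (fun V₂ : ℝ => Vt V₁ V₂ + V₁ + V₂) atTop atTop := by
    refine tendsto_atTop_mono' atTop ?_
      (tendsto_atTop_add_const_left atTop (Vs V₁ + V₁) tendsto_id)
    filter_upwards [eventually_gt_atTop 0] with V₂ h2
    have := hlow V₂ h2
    simp only [id]
    linarith
  have hlim : Tendsto (fun V₂ => Vt V₁ V₂) atTop (nhds (Vs V₁)) := by
    rw [tendsto_order]
    constructor
    · intro a ha
      filter_upwards [eventually_gt_atTop 0] with V₂ h2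
      exact ha.trans (hlow V₂ h2)
    · intro b hb
      have h1 : deriv f (Vs V₁) + deriv f (Vs V₁ + V₁) < deriv f b + deriv f (b + V₁) := hh hb
      have h3 := hVs V₁ hV₁
      have h4 : -(deriv f b + deriv f (b + V₁)) < L := by linarith
      filter_upwards [eventually_gt_atTop 0, (hL.comp hWt).eventually (lt_mem_nhds h4)]
        with V₂ h2 h5
      have h6 := hVt V₁ V₂ hV₁ h2
      refine hh.lt_iff_lt.1 ?_
      show deriv f (Vt V₁ V₂) + deriv f (Vt V₁ V₂ + V₁) < deriv f b + deriv f (b + V₁)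
      simp only [Function.comp] at h5
      linarith
  have hdiff : Tendsto (fun V₂ => f (Vt V₁ V₂ + V₁ + V₂) - f (V₁ + V₂)) atTop
      (nhds (L * Vs V₁)) := by
    refine tendsto_of_tendsto_of_tendsto_of_le_of_le ((hL.comp hW).mul hlim)
      ((hL.comp hWt).mul hlim) ?_ ?_
    · intro V₂
      have := tangent_aux f hf_conv.convexOn hd (V₁ + V₂) (Vt V₁ V₂ + V₁ + V₂)
      simp only [Function.comp]
      linarith
    · intro V₂
      have := tangent_aux f hf_conv.convexOn hd (Vt V₁ V₂ + V₁ + V₂) (V₁ + V₂)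
      simp only [Function.comp]
      linarith
  have hM' := hM.comp (hW.atTop_div_const (show (0 : ℝ) < 2 by norm_num))
  have c1 : Tendsto (fun V₂ => f (Vt V₁ V₂)) atTop (nhds (f (Vs V₁))) :=
    (hd.continuous.tendsto _).comp hlim
  have c2 : Tendsto (fun V₂ => f (Vt V₁ V₂ + V₁)) atTop (nhds (f (Vs V₁ + V₁))) :=
    (hd.continuous.tendsto _).comp (hlim.add_const V₁)
  have key := ((((tendsto_const_nhds (x := 2 * f (V₁ / 2))).sub c1).sub c2).sub hdiff).sub hM'
  rw [mul_comm L] at key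
  refine key.congr ?_
  intro V₂
  have e : 2 * ((V₁ + V₂) / 2) = V₁ + V₂ := by ring
  simp only [Function.comp, mu, e]
  ring
end

section
/- Suppose L = lim_{V→∞} f'(V) is finite and f(2V) − 2f(V) → ∞ as V → ∞ (i.e. M = ∞). Then for each fixed V₁ > 0, μ(V₁, V₂) → −∞ as V₂ → ∞. -/
open Filter Set

/-- Suppose L = lim_{V→∞} f'(V) is finite and f(2V) − 2f(V) → ∞ as
V → ∞ (i.e. M = ∞). Then for each fixed V₁ > 0, μ(V₁, V₂) → −∞ as V₂ → ∞. -/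
theorem stmt_8 (f : ℝ → ℝ)
    (hf_even : ∀ x, f (-x) = f x)
    (hf_conv : StrictConvexOn ℝ Set.univ f)
    (hf_smooth : ContDiff ℝ 1 f)
    (hf_pos : ∀ x, 0 < f x)
    (L : ℝ) (hL : Tendsto (deriv f) atTop (nhds L))
    (hM : Tendsto (fun V : ℝ => f (2 * V) - 2 * f V) atTop atTop)
    (Vt : ℝ → ℝ → ℝ)
    (hVt : ∀ V₁ V₂ : ℝ, 0 < V₁ → 0 < V₂ →
      deriv f (Vt V₁ V₂) + deriv f (Vt V₁ V₂ + V₁) + deriv f (Vt V₁ V₂ + V₁ + V₂) = 0) :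
    ∀ V₁ : ℝ, 0 < V₁ →
      Tendsto (fun V₂ => mu f Vt V₁ V₂) atTop atBot := by
  intro V₁ hV₁
  have hd : Differentiable ℝ f := hf_smooth.differentiable (by norm_num)
  have hmono : StrictMono (deriv f) := by
    have h := hf_conv.strictMonoOn_deriv (fun x _ => hd x)
    intro a b hab
    exact h (Set.mem_univ a) (Set.mem_univ b) hab
  have hodd : ∀ x, deriv f (-x) = - deriv f x := by
    intro x
    have h := deriv_comp_neg f x
    have h2 : (fun y => f (-y)) = f := funext hf_even
    rw [h2] at h
    linarith
  have h0 : deriv f 0 = 0 := by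
    have h := hodd 0
    rw [neg_zero] at h
    linarith
  have hle : ∀ x, deriv f x ≤ L := fun x => hmono.monotone.ge_of_tendsto hL x
  have hLpos : 0 < L := by
    have h1 := hmono (zero_lt_one (α := ℝ))
    have h2 := hle 1
    linarith
  obtain ⟨C, hC0, hC⟩ : ∃ C : ℝ, 0 < C ∧ L / 2 < deriv f C :=
    ((eventually_gt_atTop 0).and (hL.eventually (lt_mem_nhds (half_lt_self hLpos)))).exists
  have hx : ∀ V₂, 0 < V₂ → -(C + V₁) < Vt V₁ V₂ := by
    intro V₂ hV₂
    by_contra hcon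
    have e := hVt V₁ V₂ hV₁ hV₂
    have h1 : deriv f (Vt V₁ V₂ + V₁) ≤ deriv f (-C) := hmono.monotone (by linarith)
    have h2 : deriv f (Vt V₁ V₂) ≤ deriv f (-C) := hmono.monotone (by linarith)
    have h3 := hle (Vt V₁ V₂ + V₁ + V₂)
    rw [hodd] at h1 h2
    linarith
  have htan : ∀ a b, f a + deriv f a * (b - a) ≤ f b := by
    intro a b
    rcases lt_trichotomy a b with h | h | h
    · have := hf_conv.convexOn.deriv_le_slope (Set.mem_univ a) (Set.mem_univ b) h (hd a)
      rw [slope_def_field, le_div_iff₀ (by linarith)] at this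
      linarith
    · subst h; simp
    · have := hf_conv.convexOn.slope_le_deriv (Set.mem_univ b) (Set.mem_univ a) h (hd a)
      rw [slope_def_field, div_le_iff₀ (by linarith)] at this
      linarith
  have hhalf : Tendsto (fun V₂ : ℝ => (V₁ + V₂) / 2) atTop atTop :=
    (tendsto_atTop_add_const_left _ V₁ tendsto_id).atTop_div_const (by norm_num)
  have hM2 := hM.comp hhalf
  have hbd := tendsto_atBot_add_const_left atTop (2 * f (V₁ / 2) + L * (C + V₁))
    (tendsto_neg_atTop_atBot.comp hM2)
  refine tendsto_atBot_mono' _ ?_ hbd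
  filter_upwards [eventually_gt_atTop 0] with V₂ hV₂
  have h1 := htan (V₁ + V₂) (Vt V₁ V₂ + V₁ + V₂)
  have h2 : 0 < deriv f (V₁ + V₂) := by
    rw [← h0]; exact hmono (by linarith)
  have h3 := hle (V₁ + V₂)
  have h4 := hx V₂ hV₂
  have h5 := hf_pos (Vt V₁ V₂)
  have h6 := hf_pos (Vt V₁ V₂ + V₁)
  have h7 : -(L * (C + V₁)) ≤ deriv f (V₁ + V₂) * (Vt V₁ V₂ + V₁ + V₂ - (V₁ + V₂)) := by
    nlinarith
  have h8 : 2 * ((V₁ + V₂) / 2) = V₁ + V₂ := by ring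
  simp only [Function.comp, mu, h8]
  linarith
end

section
/- Suppose L = lim_{V→∞} f'(V) and M = lim_{V→∞} (f(2V) − 2f(V)) are both finite. Then the function μ_ℓ(V₁) = 2f(V₁/2) − f(V*(V₁)) − f(V*(V₁) + V₁) − V*(V₁)·L − M tends to +∞ as V₁ → ∞. Consequently, the set {V₁ > 0 : μ_ℓ(V₁) < 0} is bounded above, so the blowup time is finite. -/
open Filter Set

/-- Suppose L = lim_{V→∞} f'(V) and M = lim_{V→∞} (f(2V) − 2f(V)) are
both finite. Then the function μ_ℓ(V₁) = 2f(V₁/2) − f(V*(V₁)) − f(V*(V₁) + V₁)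
− V*(V₁)·L − M tends to +∞ as V₁ → ∞. Consequently, the set
{V₁ > 0 : μ_ℓ(V₁) < 0} is bounded above, so the blowup time is finite. -/
theorem stmt_9 (f : ℝ → ℝ)
    (hf_even : ∀ x, f (-x) = f x)
    (hf_conv : StrictConvexOn ℝ Set.univ f)
    (hf_smooth : ContDiff ℝ 1 f)
    (hf_pos : ∀ x, 0 < f x)
    (L : ℝ) (hL : Tendsto (deriv f) atTop (nhds L))
    (M : ℝ) (hM : Tendsto (fun V : ℝ => f (2 * V) - 2 * f V) atTop (nhds M))
    (Vs : ℝ → ℝ)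
    (hVs : ∀ V₁ : ℝ, 0 < V₁ → deriv f (Vs V₁) + deriv f (Vs V₁ + V₁) = -L) :
    Tendsto (fun V₁ => 2 * f (V₁ / 2) - f (Vs V₁) - f (Vs V₁ + V₁) - Vs V₁ * L - M)
      atTop atTop ∧
    BddAbove {V₁ : ℝ | 0 < V₁ ∧
      2 * f (V₁ / 2) - f (Vs V₁) - f (Vs V₁ + V₁) - Vs V₁ * L - M < 0} := by
  have hd : Differentiable ℝ f := hf_smooth.differentiable (by norm_num)
  have hodd : ∀ x, deriv f (-x) = - deriv f x := by
    intro x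
    have h1 : (fun y => f (-y)) = f := funext hf_even
    have h2 := deriv_comp_neg f x
    rw [h1] at h2
    linarith
  have hmvt : ∀ x y, x < y → ∃ c, x < c ∧ c < y ∧ f y - f x = deriv f c * (y - x) := by
    intro x y hxy
    obtain ⟨c, hc, h⟩ := exists_deriv_eq_slope f hxy hd.continuous.continuousOn
      hd.differentiableOn
    refine ⟨c, hc.1, hc.2, ?_⟩
    rw [h]
    field_simp [sub_ne_zero.mpr hxy.ne']
  have hmono : StrictMono (deriv f) := by
    have := hf_conv.strictMonoOn_deriv (fun x _ => hd x)
    intro x y hxy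
    exact this (by simp) (by simp) hxy
  have hltL : ∀ x, deriv f x < L := fun x =>
    lt_of_lt_of_le (hmono (lt_add_one x)) (hmono.monotone.ge_of_tendsto hL _)
  have h0 : deriv f 0 = 0 := by
    have := hodd 0
    simp at this
    linarith
  have hLpos : 0 < L := h0 ▸ hltL 0
  -- linear upper bound
  have hup : ∀ x, 0 ≤ x → f x ≤ f 0 + L * x := by
    intro x hx
    rcases hx.eq_or_lt with rfl | hx
    · simp
    · obtain ⟨c, -, -, h⟩ := hmvt 0 x hx
      have := mul_lt_mul_of_pos_right (hltL c) hx
      simp only [sub_zero] at h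
      linarith
  -- tangent lower bound
  have htan : ∀ y x, y ≤ x → f y + deriv f y * (x - y) ≤ f x := by
    intro y x hx
    rcases hx.eq_or_lt with rfl | hx
    · simp
    · obtain ⟨c, hc, -, h⟩ := hmvt y x hx
      have := mul_lt_mul_of_pos_right (hmono hc) (sub_pos.mpr hx)
      linarith
  -- eventual lower bound
  have hlow : ∀ᶠ V in atTop, L * V - (M + 1) ≤ f V := by
    obtain ⟨V0, hV0⟩ := eventually_atTop.mp (hM.eventually (gt_mem_nhds (lt_add_one M)))
    filter_upwards [eventually_ge_atTop V0, eventually_ge_atTop 1] with V hV hV1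
    by_contra hcon
    push Not at hcon
    obtain ⟨k, hk⟩ : ∃ k, k = f V - L * V + (M + 1) := ⟨_, rfl⟩
    have hkneg : k < 0 := by linarith
    have hind : ∀ n : ℕ, f (2 ^ n * V) - L * (2 ^ n * V) + (M + 1) ≤ 2 ^ n * k := by
      intro n
      induction n with
      | zero => simp [hk]
      | succ n ih =>
        have h1 : (1 : ℝ) ≤ 2 ^ n := one_le_pow₀ (by norm_num)
        have h2 : V0 ≤ 2 ^ n * V := by nlinarith
        have h3 := hV0 _ h2
        have e : (2 : ℝ) ^ (n + 1) * V = 2 * (2 ^ n * V) := by ring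
        have e' : (2 : ℝ) ^ (n + 1) * k = 2 * (2 ^ n * k) := by ring
        rw [e, e']
        linarith
    have hVpos : 0 < V := by linarith
    have hlt : L - (-k / (2 * V)) < L := by
      have : 0 < -k / (2 * V) := div_pos (by linarith) (by linarith)
      linarith
    obtain ⟨y, hy0, hy⟩ := ((eventually_ge_atTop (0 : ℝ)).and
      (hL.eventually (lt_mem_nhds hlt))).exists
    have hpow : Tendsto (fun n : ℕ => (2 : ℝ) ^ n) atTop atTop :=
      tendsto_pow_atTop_atTop_of_one_lt (by norm_num)
    obtain ⟨n, hn1, hn2⟩ := ((hpow.eventually_ge_atTop y).and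
      (hpow.eventually_gt_atTop ((f y - L * y + (M + 1)) / (k / 2)))).exists
    have hn3 : (2 : ℝ) ^ n * (k / 2) < f y - L * y + (M + 1) := by
      rwa [div_lt_iff_of_neg (by linarith)] at hn2
    have hyx : y ≤ 2 ^ n * V := by nlinarith
    have h4 := htan y _ hyx
    have h5 := mul_le_mul_of_nonneg_right hy.le (sub_nonneg.mpr hyx)
    have h6 := hind n
    have h7 : -k / (2 * V) * (2 ^ n * V) = - (2 ^ n * (k / 2)) := by
      field_simp
    have h8 : 0 ≤ -k / (2 * V) * y := mul_nonneg (by linarith) hy0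
    nlinarith
  have hmain : Tendsto
      (fun V₁ => 2 * f (V₁ / 2) - f (Vs V₁) - f (Vs V₁ + V₁) - Vs V₁ * L - M) atTop atTop := by
    have hlin : Tendsto (fun V₁ : ℝ => L * V₁ + (- 2 * (M + 1) - 2 * f 0 - L - M))
        atTop atTop :=
      tendsto_atTop_add_const_right _ _ (tendsto_id.const_mul_atTop hLpos)
    refine tendsto_atTop_mono' _ ?_ hlin
    have hhalf : Tendsto (fun V₁ : ℝ => V₁ / 2) atTop atTop :=
      tendsto_id.atTop_div_const (by norm_num)
    have h1pos : 0 < deriv f 1 := h0 ▸ hmono one_pos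
    filter_upwards [hhalf.eventually hlow, eventually_gt_atTop 0,
      hL.eventually (lt_mem_nhds (show L - deriv f 1 < L by linarith))] with V h1 hV h2
    obtain ⟨b, hb⟩ : ∃ b, Vs V = -(V + b) := ⟨-Vs V - V, by ring⟩
    have h3 := hVs V hV
    have e1 : Vs V + V = -b := by linarith
    rw [e1, hb, hodd, hodd] at h3
    have hb0 : 0 < b := by
      rw [← hmono.lt_iff_lt, h0]
      linarith [hltL (V + b)]
    have hb1 : b < 1 := by
      rw [← hmono.lt_iff_lt]
      linarith [hmono (show V < V + b by linarith)]
    rw [e1, hb, hf_even, hf_even]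
    have h4 := hup (V + b) (by linarith)
    have h5 := hup b hb0.le
    nlinarith
  refine ⟨hmain, ?_⟩
  obtain ⟨B, hB⟩ := eventually_atTop.mp (hmain.eventually_ge_atTop 0)
  refine ⟨B, fun V hV => ?_⟩
  by_contra hlt
  push Not at hlt
  exact absurd (hB V hlt.le) (not_le.mpr hV.2)
end

section
/- Suppose L = lim_{V→∞} f'(V) is finite. Then as V₁ → 0⁺, V*(V₁) converges to −V̄, where V̄ is the unique real number with f'(V̄) = L/2. Moreover, if M = lim_{V→∞} (f(2V) − 2f(V)) is also finite, then 2f(V₁/2) − f(V*(V₁)) − f(V*(V₁) + V₁) − V*(V₁)·L − M converges to 2f(0) − 2f(V̄) + V̄·L − M as V₁ → 0⁺. -/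
open Filter Set

/-- Suppose L = lim_{V→∞} f'(V) is finite. Then as V₁ → 0⁺, V*(V₁)
converges to −V̄, where V̄ is the unique real number with f'(V̄) = L/2. Moreover,
if M = lim_{V→∞} (f(2V) − 2f(V)) is also finite, then
2f(V₁/2) − f(V*(V₁)) − f(V*(V₁) + V₁) − V*(V₁)·L − M converges to
2f(0) − 2f(V̄) + V̄·L − M as V₁ → 0⁺. -/
theorem stmt_10 (f : ℝ → ℝ)
    (hf_even : ∀ x, f (-x) = f x)
    (hf_conv : StrictConvexOn ℝ Set.univ f)
    (hf_smooth : ContDiff ℝ 1 f)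
    (hf_pos : ∀ x, 0 < f x)
    (L : ℝ) (hL : Tendsto (deriv f) atTop (nhds L))
    (Vs : ℝ → ℝ)
    (hVs : ∀ V₁ : ℝ, 0 < V₁ → deriv f (Vs V₁) + deriv f (Vs V₁ + V₁) = -L)
    (Vbar : ℝ) (hVbar : deriv f Vbar = L / 2) :
    Tendsto Vs (nhdsWithin 0 (Set.Ioi 0)) (nhds (-Vbar)) ∧
    ∀ M : ℝ, Tendsto (fun V : ℝ => f (2 * V) - 2 * f V) atTop (nhds M) →
      Tendsto (fun V₁ => 2 * f (V₁ / 2) - f (Vs V₁) - f (Vs V₁ + V₁) - Vs V₁ * L - M)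
        (nhdsWithin 0 (Set.Ioi 0))
        (nhds (2 * f 0 - 2 * f Vbar + Vbar * L - M)) := by
  have hd : Differentiable ℝ f := hf_smooth.differentiable (by norm_num)
  have hc : Continuous f := hf_smooth.continuous
  have hmono : StrictMono (deriv f) := by
    have h := hf_conv.strictMonoOn_deriv (fun x _ => hd x)
    exact strictMonoOn_univ.mp h
  have hodd : deriv f (-Vbar) = -(L / 2) := by
    have h := deriv_comp_neg f Vbar
    have h2 : (fun x => f (-x)) = f := funext hf_even
    rw [h2] at h
    linarith
  have hup : ∀ V₁ : ℝ, 0 < V₁ → Vs V₁ ≤ -Vbar := by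
    intro v hv
    by_contra! hlt
    have h1 := hmono hlt
    have h2 : deriv f (-Vbar) < deriv f (Vs v + v) := hmono (by linarith)
    have h3 := hVs v hv
    linarith
  have hlo : ∀ V₁ : ℝ, 0 < V₁ → -Vbar - V₁ ≤ Vs V₁ := by
    intro v hv
    by_contra! hlt
    have h1 : deriv f (Vs v) < deriv f (-Vbar) := hmono (by linarith)
    have h2 : deriv f (Vs v + v) < deriv f (-Vbar) := hmono (by linarith)
    have h3 := hVs v hv
    linarith
  have hid : Tendsto (fun v : ℝ => v) (nhdsWithin 0 (Set.Ioi 0)) (nhds 0) :=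
    tendsto_id.mono_left nhdsWithin_le_nhds
  have hT : Tendsto Vs (nhdsWithin 0 (Set.Ioi 0)) (nhds (-Vbar)) := by
    have h1 : Tendsto (fun v : ℝ => -Vbar - v) (nhdsWithin 0 (Set.Ioi 0)) (nhds (-Vbar)) := by
      simpa using hid.const_sub (-Vbar)
    refine tendsto_of_tendsto_of_tendsto_of_le_of_le' h1 tendsto_const_nhds ?_ ?_
    · filter_upwards [self_mem_nhdsWithin] with v hv using hlo v hv
    · filter_upwards [self_mem_nhdsWithin] with v hv using hup v hv
  refine ⟨hT, fun M _ => ?_⟩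
  have a1 := (hc.tendsto _).comp (hid.div_const 2)
  have a2 := (hc.tendsto _).comp hT
  have a3 := (hc.tendsto _).comp (hT.add hid)
  have key := ((((a1.const_mul 2).sub a2).sub a3).sub (hT.mul_const L)).sub_const M
  have e : 2 * f (0 / 2) - f (-Vbar) - f (-Vbar + 0) - -Vbar * L - M
      = 2 * f 0 - 2 * f Vbar + Vbar * L - M := by
    rw [add_zero, zero_div, hf_even]; ring
  rw [e] at key
  exact key
end

section
/- Let V₁ > 0 and suppose there exists some V₂' ≥ V₁ with μ(V₁, V₂') < 0. Then there exists a unique λ > V₁ with μ(V₁, λ) = 0; moreover μ(V₁, V₂) < 0 for every V₂ > λ, and μ(V₁, V₂) > 0 for every V₂ with V₁ ≤ V₂ < λ. (At V₂ = λ the double interval and the triple interval tie.) -/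
open Filter Set

/-- Let V₁ > 0 and suppose there exists some V₂' ≥ V₁ with
μ(V₁, V₂') < 0. Then there exists a unique λ > V₁ with μ(V₁, λ) = 0; moreover
μ(V₁, V₂) < 0 for every V₂ > λ, and μ(V₁, V₂) > 0 for every V₂ with V₁ ≤ V₂ < λ. -/
theorem stmt_11 (f : ℝ → ℝ)
    (hf_even : ∀ x, f (-x) = f x)
    (hf_conv : StrictConvexOn ℝ Set.univ f)
    (hf_smooth : ContDiff ℝ 1 f)
    (hf_pos : ∀ x, 0 < f x)
    (Vt : ℝ → ℝ → ℝ)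
    (hVt : ∀ V₁ V₂ : ℝ, 0 < V₁ → 0 < V₂ →
      deriv f (Vt V₁ V₂) + deriv f (Vt V₁ V₂ + V₁) + deriv f (Vt V₁ V₂ + V₁ + V₂) = 0)
    (V₁ : ℝ) (hV₁ : 0 < V₁)
    (hneg : ∃ V₂' : ℝ, V₁ ≤ V₂' ∧ mu f Vt V₁ V₂' < 0) :
    ∃ lam : ℝ, V₁ < lam ∧ mu f Vt V₁ lam = 0 ∧
      (∀ lam' : ℝ, V₁ < lam' → mu f Vt V₁ lam' = 0 → lam' = lam) ∧
      (∀ V₂ : ℝ, lam < V₂ → mu f Vt V₁ V₂ < 0) ∧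
      (∀ V₂ : ℝ, V₁ ≤ V₂ → V₂ < lam → 0 < mu f Vt V₁ V₂) := by
  have hd : Differentiable ℝ f := hf_smooth.differentiable (by norm_num)
  have hmono : StrictMono (deriv f) := by
    have h := hf_conv.strictMonoOn_deriv (fun x _ => hd x)
    intro x y hxy
    exact h (Set.mem_univ x) (Set.mem_univ y) hxy
  have hodd : ∀ x, deriv f (-x) = - deriv f x := by
    intro x
    have h1 : (fun x => f (-x)) = f := funext hf_even
    have h2 := deriv_comp_neg f x
    rw [h1] at h2
    linarith
  have h0 : deriv f 0 = 0 := by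
    have := hodd 0
    rw [neg_zero] at this
    linarith
  have htan : ∀ x y, f x + deriv f x * (y - x) ≤ f y := by
    intro x y
    rcases lt_trichotomy x y with h | h | h
    · have := hf_conv.convexOn.deriv_le_slope (Set.mem_univ x) (Set.mem_univ y) h (hd x)
      rw [slope_def_field, le_div_iff₀ (by linarith)] at this
      linarith
    · subst h; simp
    · have := hf_conv.convexOn.slope_le_deriv (Set.mem_univ y) (Set.mem_univ x) h (hd x)
      rw [slope_def_field, div_le_iff₀ (by linarith)] at this
      linarith
  have hfm : ∀ x y, 0 ≤ x → x ≤ y → f x ≤ f y := by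
    intro x y hx hxy
    have h1 := htan x y
    have h2 : 0 ≤ deriv f x := by rw [← h0]; exact hmono.monotone hx
    have h3 := mul_nonneg h2 (sub_nonneg.2 hxy)
    linarith
  -- the equilibrium minimizes the triple perimeter
  have hmu : ∀ V, 0 < V → ∀ x,
      2 * f (V₁ / 2) + 2 * f ((V₁ + V) / 2) - f x - f (x + V₁) - f (x + V₁ + V)
        ≤ mu f Vt V₁ V := by
    intro V hV x
    unfold mu
    have e := hVt V₁ V hV₁ hV
    set t := Vt V₁ V
    have a1 := htan t x
    have a2 := htan (t + V₁) (x + V₁)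
    have a3 := htan (t + V₁ + V) (x + V₁ + V)
    have : (deriv f t + deriv f (t + V₁) + deriv f (t + V₁ + V)) * (x - t) = 0 := by
      rw [e, zero_mul]
    linarith
  have hlow : ∀ W, V₁ < W → -(V₁ + W) / 2 < Vt V₁ W := by
    intro W hW
    by_contra hc
    push Not at hc
    have e := hVt V₁ W hV₁ (hV₁.trans hW)
    set t := Vt V₁ W
    have b1 : deriv f t ≤ deriv f (-((V₁ + W) / 2)) := hmono.monotone (by linarith)
    have b2 : deriv f (t + V₁) < deriv f 0 := hmono (by linarith)
    have b3 : deriv f (t + V₁ + W) ≤ deriv f ((V₁ + W) / 2) := hmono.monotone (by linarith)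
    rw [hodd] at b1
    linarith
  have hanti : StrictAntiOn (mu f Vt V₁) (Set.Ici V₁) := by
    intro V hV W hW hVW
    have hV' : V₁ ≤ V := hV
    have hW' : V₁ < W := lt_of_le_of_lt hV' hVW
    have hl := hlow W hW'
    have hWeq : mu f Vt V₁ W = 2 * f (V₁ / 2) + 2 * f ((V₁ + W) / 2)
      - f (Vt V₁ W) - f (Vt V₁ W + V₁) - f (Vt V₁ W + V₁ + W) := rfl
    set t := Vt V₁ W
    have key : StrictAntiOn (fun U => 2 * f ((V₁ + U) / 2) - f (t + V₁ + U))
        (Set.Ici (-2 * t - V₁)) := by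
      have hder : ∀ U, HasDerivAt (fun U => 2 * f ((V₁ + U) / 2) - f (t + V₁ + U))
          (deriv f ((V₁ + U) / 2) - deriv f (t + V₁ + U)) U := by
        intro U
        have c1 : HasDerivAt (fun U : ℝ => (V₁ + U) / 2) (1 / 2) U :=
          ((hasDerivAt_id U).const_add V₁).div_const 2
        have c2 : HasDerivAt (fun U : ℝ => t + V₁ + U) 1 U :=
          (hasDerivAt_id U).const_add (t + V₁)
        have d1 := (HasDerivAt.comp U (hd ((V₁ + U) / 2)).hasDerivAt c1).const_mul 2
        have d2 := HasDerivAt.comp U (hd (t + V₁ + U)).hasDerivAt c2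
        have d3 := d1.sub d2
        refine HasDerivAt.congr_deriv d3 ?_
        ring
      apply strictAntiOn_of_deriv_neg (convex_Ici _)
      · exact fun U _ => (hder U).continuousAt.continuousWithinAt
      · intro U hU
        rw [interior_Ici] at hU
        have hU' : -2 * t - V₁ < U := hU
        rw [(hder U).deriv]
        have : deriv f ((V₁ + U) / 2) < deriv f (t + V₁ + U) := hmono (by linarith)
        linarith
    by_cases hc : -2 * t - V₁ ≤ V
    · have k := key (Set.mem_Ici.2 hc) (Set.mem_Ici.2 (hc.trans hVW.le)) hVW
      have m := hmu V (hV₁.trans_le hV') t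
      simp only at k
      linarith
    · push Not at hc
      have k := key (Set.mem_Ici.2 le_rfl)
        (Set.mem_Ici.2 (show -2 * t - V₁ ≤ W by linarith)) (show -2 * t - V₁ < W by linarith)
      simp only at k
      have m := hmu V (hV₁.trans_le hV') (-((V₁ + V) / 2))
      have q := hfm ((V - V₁) / 2) (-(t + V₁)) (by linarith) (by linarith)
      rw [hf_even] at m q
      rw [show -((V₁ + V) / 2) + V₁ = -((V - V₁) / 2) by ring, hf_even,
        show -((V - V₁) / 2) + V = (V₁ + V) / 2 by ring] at m
      rw [show (V₁ + (-2 * t - V₁)) / 2 = -t by ring, hf_even,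
        show t + V₁ + (-2 * t - V₁) = -t by ring, hf_even] at k
      linarith
  have hlip : ∀ V W, 0 < V → V ≤ W →
      Vt V₁ W ≤ Vt V₁ V ∧ Vt V₁ V - (W - V) ≤ Vt V₁ W := by
    intro V W hV hVW
    have e1 := hVt V₁ V hV₁ hV
    have e2 := hVt V₁ W hV₁ (hV.trans_le hVW)
    constructor
    · by_contra hc
      push Not at hc
      have b1 := hmono hc
      have b2 : deriv f (Vt V₁ V + V₁) < deriv f (Vt V₁ W + V₁) := hmono (by linarith)
      have b3 : deriv f (Vt V₁ V + V₁ + V) < deriv f (Vt V₁ W + V₁ + W) := hmono (by linarith)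
      linarith
    · by_contra hc
      push Not at hc
      have b1 : deriv f (Vt V₁ W) < deriv f (Vt V₁ V) := hmono (by linarith)
      have b2 : deriv f (Vt V₁ W + V₁) < deriv f (Vt V₁ V + V₁) := hmono (by linarith)
      have b3 : deriv f (Vt V₁ W + V₁ + W) < deriv f (Vt V₁ V + V₁ + V) := hmono (by linarith)
      linarith
  have hVc : ContinuousOn (Vt V₁) (Set.Ici V₁) := by
    have : LipschitzOnWith 1 (Vt V₁) (Set.Ici V₁) := by
      apply LipschitzOnWith.of_dist_le_mul
      intro x hx y hy
      have hx' : V₁ ≤ x := hx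
      have hy' : V₁ ≤ y := hy
      rw [Real.dist_eq, Real.dist_eq, NNReal.coe_one, one_mul]
      rcases le_total x y with h | h
      · obtain ⟨p, q⟩ := hlip x y (by linarith) h
        rw [abs_of_nonneg (by linarith), abs_of_nonpos (by linarith)]
        linarith
      · obtain ⟨p, q⟩ := hlip y x (by linarith) h
        rw [abs_of_nonpos (by linarith), abs_of_nonneg (by linarith)]
        linarith
    exact this.continuousOn
  have hcont : ContinuousOn (mu f Vt V₁) (Set.Ici V₁) := by
    have hfc := hd.continuous
    unfold mu
    have g1 : ContinuousOn (fun V => f ((V₁ + V) / 2)) (Set.Ici V₁) :=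
      (hfc.comp (by fun_prop)).continuousOn
    have g2 : ContinuousOn (fun V => f (Vt V₁ V)) (Set.Ici V₁) := hfc.comp_continuousOn hVc
    have g3 : ContinuousOn (fun V => f (Vt V₁ V + V₁)) (Set.Ici V₁) :=
      hfc.comp_continuousOn (hVc.add continuousOn_const)
    have g4 : ContinuousOn (fun V => f (Vt V₁ V + V₁ + V)) (Set.Ici V₁) :=
      hfc.comp_continuousOn ((hVc.add continuousOn_const).add continuousOn_id)
    exact (((continuousOn_const.add (continuousOn_const.mul g1)).sub g2).sub g3).sub g4
  have hstart : 0 < mu f Vt V₁ V₁ := by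
    have m := hmu V₁ hV₁ (-V₁)
    rw [hf_even, neg_add_cancel, zero_add, show (V₁ + V₁) / 2 = V₁ by ring] at m
    have := hfm 0 (V₁ / 2) le_rfl (by linarith)
    have := hf_pos 0
    linarith
  obtain ⟨W, hW, hWneg⟩ := hneg
  obtain ⟨lam, hlam, hz⟩ := intermediate_value_Icc' hW
    (hcont.mono Set.Icc_subset_Ici_self) (show (0 : ℝ) ∈ Set.Icc _ _ from ⟨hWneg.le, hstart.le⟩)
  have hne : V₁ < lam := by
    rcases hlam.1.lt_or_eq with h | h
    · exact h
    · rw [← h] at hz; linarith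
  have hmem : lam ∈ Set.Ici V₁ := hlam.1
  refine ⟨lam, hne, hz, ?_, ?_, ?_⟩
  · intro l hl hl0
    exact hanti.injOn (Set.mem_Ici.2 hl.le) hmem (hl0.trans hz.symm)
  · intro V hV
    rw [← hz]
    exact hanti hmem (Set.mem_Ici.2 (hne.trans hV).le) hV
  · intro V hV hVl
    rw [← hz]
    exact hanti (Set.mem_Ici.2 hV) hmem hVl
end

section
/- If V₁ > 0 and V₁ ≥ V₀ (in particular V₀ is finite), then μ(V₁, V₂) > 0 for every V₂ ≥ V₁; that is, at and beyond the blowup time the double interval strictly beats the triple interval for all larger prescribed volumes. -/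
open Filter Set

/-- If V₁ > 0 and V₁ ≥ V₀ (in particular V₀ is finite), then
μ(V₁, V₂) > 0 for every V₂ ≥ V₁. Here V₀ = sup{W > 0 : ∃ V₂ ≥ W, μ(W,V₂) < 0}, so
"V₁ ≥ V₀" is expressed by saying V₁ is an upper bound of that set. -/
theorem stmt_12 (f : ℝ → ℝ)
    (hf_even : ∀ x, f (-x) = f x)
    (hf_conv : StrictConvexOn ℝ Set.univ f)
    (hf_smooth : ContDiff ℝ 1 f)
    (hf_pos : ∀ x, 0 < f x)
    (Vt : ℝ → ℝ → ℝ)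
    (hVt : ∀ V₁ V₂ : ℝ, 0 < V₁ → 0 < V₂ →
      deriv f (Vt V₁ V₂) + deriv f (Vt V₁ V₂ + V₁) + deriv f (Vt V₁ V₂ + V₁ + V₂) = 0)
    (V₁ : ℝ) (hV₁ : 0 < V₁)
    (hub : V₁ ∈ upperBounds {W : ℝ | 0 < W ∧ ∃ V₂ : ℝ, W ≤ V₂ ∧ mu f Vt W V₂ < 0}) :
    ∀ V₂ : ℝ, V₁ ≤ V₂ → 0 < mu f Vt V₁ V₂ := by
  have hd : Differentiable ℝ f := hf_smooth.differentiable (by norm_num)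
  have hmono : StrictMono (deriv f) := by
    have h := hf_conv.strictMonoOn_deriv (fun x _ => hd x)
    intro x y hxy
    exact h (mem_univ x) (mem_univ y) hxy
  have hodd : ∀ x, deriv f (-x) = - deriv f x := by
    intro x
    have h1 : deriv (fun y => f (-y)) x = - deriv f (-x) := deriv_comp_neg f x
    have h2 : (fun y => f (-y)) = f := funext hf_even
    rw [h2] at h1
    linarith
  have hg0 : deriv f 0 = 0 := by
    have := hodd 0
    rw [neg_zero] at this
    linarith
  have htan : ∀ x y, f x + deriv f x * (y - x) ≤ f y := by
    intro x y
    rcases lt_trichotomy x y with h | h | h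
    · have := hf_conv.convexOn.deriv_le_slope (mem_univ x) (mem_univ y) h (hd x)
      rw [slope_def_field, le_div_iff₀ (by linarith)] at this
      linarith
    · subst h; simp
    · have := hf_conv.convexOn.slope_le_deriv (mem_univ y) (mem_univ x) h (hd x)
      rw [slope_def_field, div_le_iff₀ (by linarith)] at this
      linarith
  have hmin : ∀ A B u, 0 < A → 0 < B →
      f (Vt A B) + f (Vt A B + A) + f (Vt A B + A + B) ≤ f u + f (u + A) + f (u + A + B) := by
    intro A B u hA hB
    have h0 := hVt A B hA hB
    have h1 := htan (Vt A B) u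
    have h2 := htan (Vt A B + A) (u + A)
    have h3 := htan (Vt A B + A + B) (u + A + B)
    have h4 : deriv f (Vt A B) * (u - Vt A B) + deriv f (Vt A B + A) * (u + A - (Vt A B + A))
      + deriv f (Vt A B + A + B) * (u + A + B - (Vt A B + A + B)) = 0 := by
      linear_combination (u - Vt A B) * h0
    linarith
  -- perturbing the first volume
  have hpert : ∀ B, V₁ < B → 0 ≤ mu f Vt V₁ B := by
    intro B hB
    by_contra hneg
    push Not at hneg
    have hK : 0 < deriv f (V₁ + B) := by
      rw [← hg0]; exact hmono (by linarith)
    set K := deriv f (V₁ + B) with hKdef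
    obtain ⟨e, he, he1, he2⟩ : ∃ e : ℝ, 0 < e ∧ 2 * e ≤ B - V₁ ∧ 2 * e * K < - mu f Vt V₁ B := by
      refine ⟨min ((B - V₁) / 2) (- mu f Vt V₁ B / (4 * K)), ?_, ?_, ?_⟩
      · exact lt_min (by linarith) (div_pos (by linarith) (by linarith))
      · have := min_le_left ((B - V₁) / 2) (- mu f Vt V₁ B / (4 * K))
        linarith
      · have := min_le_right ((B - V₁) / 2) (- mu f Vt V₁ B / (4 * K))
        rw [le_div_iff₀ (by linarith)] at this
        linarith
    have hlt : mu f Vt (V₁ + e) (B - e) < 0 := by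
      have hW := hVt (V₁ + e) (B - e) (by linarith) (by linarith)
      have hm := hmin V₁ B (Vt (V₁ + e) (B - e)) hV₁ (by linarith)
      unfold mu at he2 ⊢
      set v := Vt (V₁ + e) (B - e)
      have e1 : v + (V₁ + e) + (B - e) = v + V₁ + B := by ring
      have e2 : V₁ + e + (B - e) = V₁ + B := by ring
      rw [e1] at hW ⊢
      rw [e2]
      have hv : -(V₁ + B) ≤ v := by
        by_contra hc
        push Not at hc
        have a1 := hmono (show v < 0 by linarith)
        have a2 := hmono (show v + (V₁ + e) < 0 by linarith)
        have a3 := hmono (show v + V₁ + B < 0 by linarith)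
        linarith
      have t1 := htan (v + V₁) (v + (V₁ + e))
      have t2 := htan ((V₁ + e) / 2) (V₁ / 2)
      have k1 : -K ≤ deriv f (v + V₁) := by
        rw [hKdef, ← hodd]; exact hmono.monotone (by linarith)
      have k2 : deriv f ((V₁ + e) / 2) ≤ K := hmono.monotone (by linarith)
      have k1' := mul_le_mul_of_nonneg_right k1 he.le
      have k2' := mul_le_mul_of_nonneg_right k2 he.le
      have r1 : v + (V₁ + e) - (v + V₁) = e := by ring
      have r2 : V₁ / 2 - (V₁ + e) / 2 = -(e / 2) := by ring
      rw [r1] at t1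
      rw [r2] at t2
      linarith
    have := hub ⟨by linarith, B - e, by linarith, hlt⟩
    linarith
  intro V₂ hV
  have hV₂ : 0 < V₂ := by linarith
  rcases hV.eq_or_lt with h | h
  · subst h
    have hm := hmin V₁ V₁ (-V₁) hV₁ hV₁
    have r1 : -V₁ + V₁ = 0 := by ring
    have r2 : (V₁ + V₁) / 2 = V₁ := by ring
    rw [r1, zero_add, hf_even] at hm
    have t := htan 0 (V₁ / 2)
    rw [hg0] at t
    unfold mu
    rw [r2]
    have := hf_pos 0
    linarith
  · have hx : (V₁ + V₂) / 2 < Vt V₁ V₂ + V₁ + V₂ := by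
      by_contra hc
      push Not at hc
      have h0 := hVt V₁ V₂ hV₁ hV₂
      have a1 := hmono.monotone (show Vt V₁ V₂ ≤ -((V₁ + V₂) / 2) by linarith)
      have a2 := hmono (show Vt V₁ V₂ + V₁ < 0 by linarith)
      have a3 := hmono.monotone hc
      rw [hodd] at a1
      linarith
    obtain ⟨d, hd0, hd1⟩ : ∃ d : ℝ, 0 < d ∧ (V₁ + V₂) / 2 + 3 / 2 * d < Vt V₁ V₂ + V₁ + V₂ :=
      ⟨(Vt V₁ V₂ + V₁ + V₂ - (V₁ + V₂) / 2) / 3, by linarith, by linarith⟩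
    have hnn := hpert (V₂ + d) (by linarith)
    have hx' : Vt V₁ V₂ + V₁ + V₂ ≤ Vt V₁ (V₂ + d) + V₁ + (V₂ + d) := by
      by_contra hc
      push Not at hc
      have h0 := hVt V₁ V₂ hV₁ hV₂
      have h1 := hVt V₁ (V₂ + d) hV₁ (by linarith)
      have a1 := hmono (show Vt V₁ (V₂ + d) < Vt V₁ V₂ by linarith)
      have a2 := hmono (show Vt V₁ (V₂ + d) + V₁ < Vt V₁ V₂ + V₁ by linarith)
      have a3 := hmono hc
      linarith
    have hm := hmin V₁ V₂ (Vt V₁ (V₂ + d)) hV₁ hV₂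
    unfold mu at hnn ⊢
    set v := Vt V₁ (V₂ + d)
    have t1 := htan (v + V₁ + V₂) (v + V₁ + (V₂ + d))
    have t2 := htan ((V₁ + (V₂ + d)) / 2) ((V₁ + V₂) / 2)
    have k := hmono (show (V₁ + (V₂ + d)) / 2 < v + V₁ + V₂ by linarith)
    have k' := mul_lt_mul_of_pos_right k hd0
    have r1 : v + V₁ + (V₂ + d) - (v + V₁ + V₂) = d := by ring
    have r2 : (V₁ + V₂) / 2 - (V₁ + (V₂ + d)) / 2 = -(d / 2) := by ring
    rw [r1] at t1
    rw [r2] at t2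
    linarith
end

section
/- Assume V₀ > 0, and let λ : (0, V₀) → ℝ be the tie function assigning to each V₁ ∈ (0, V₀) the unique λ(V₁) > V₁ with μ(V₁, λ(V₁)) = 0. Then λ is strictly increasing, continuously differentiable, and tends to a finite positive limit as V₁ → 0⁺. -/
open Filter Set

/-- The set S whose supremum is the blowup time V₀. -/
noncomputable def blowupSet (f : ℝ → ℝ) (Vt : ℝ → ℝ → ℝ) : Set ℝ :=
  {W : ℝ | 0 < W ∧ ∃ V₂ : ℝ, W ≤ V₂ ∧ mu f Vt W V₂ < 0}

/-- The interval (0, V₀): V₁ lies strictly below the supremum V₀ of `blowupSet` iff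
V₁ is positive and fails to be an upper bound of `blowupSet` (valid whether V₀ is
finite or infinite). -/
def tieDomain (f : ℝ → ℝ) (Vt : ℝ → ℝ → ℝ) : Set ℝ :=
  {V₁ : ℝ | 0 < V₁ ∧ ∃ W ∈ blowupSet f Vt, V₁ < W}

open Topology Asymptotics

/-- The triple interval objective. -/
noncomputable def tripG (f : ℝ → ℝ) (q : (ℝ × ℝ) × ℝ) : ℝ :=
  f q.2 + f (q.2 + q.1.1) + f (q.2 + q.1.1 + q.1.2)

/-- Derivative of the value function. -/
noncomputable def tripD (f : ℝ → ℝ) (Vt : ℝ → ℝ → ℝ) (p : ℝ × ℝ) : ℝ × ℝ →L[ℝ] ℝ :=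
  (deriv f (Vt p.1 p.2 + p.1) + deriv f (Vt p.1 p.2 + p.1 + p.2)) • ContinuousLinearMap.fst ℝ ℝ ℝ
   + deriv f (Vt p.1 p.2 + p.1 + p.2) • ContinuousLinearMap.snd ℝ ℝ ℝ

/-- Derivative of mu. -/
noncomputable def muD (f : ℝ → ℝ) (Vt : ℝ → ℝ → ℝ) (p : ℝ × ℝ) : ℝ × ℝ →L[ℝ] ℝ :=
  (deriv f (p.1 / 2)) • ContinuousLinearMap.fst ℝ ℝ ℝ
   + deriv f ((p.1 + p.2) / 2) • (ContinuousLinearMap.fst ℝ ℝ ℝ + ContinuousLinearMap.snd ℝ ℝ ℝ)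
   - tripD f Vt p

lemma tangent_le {f : ℝ → ℝ} (hc : ConvexOn ℝ Set.univ f) (hd : Differentiable ℝ f) (x y : ℝ) :
    f x + deriv f x * (y - x) ≤ f y := by
  rcases lt_trichotomy x y with h | h | h
  · have := hc.deriv_le_slope (mem_univ x) (mem_univ y) h (hd x)
    rw [slope_def_field, le_div_iff₀ (by linarith)] at this
    linarith
  · subst h; simp
  · have := hc.slope_le_deriv (mem_univ y) (mem_univ x) h (hd x)
    rw [slope_def_field, div_le_iff₀ (by linarith)] at this
    linarith

section
variable {f : ℝ → ℝ} {Vt : ℝ → ℝ → ℝ}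

lemma deriv_strictMono (hc : StrictConvexOn ℝ Set.univ f) (hs : ContDiff ℝ 1 f) :
    StrictMono (deriv f) := by
  have hd : Differentiable ℝ f := hs.differentiable (by norm_num)
  have := hc.strictMonoOn_deriv (fun x _ => hd x)
  exact strictMonoOn_univ.1 this

lemma deriv_odd (he : ∀ x, f (-x) = f x) (x : ℝ) : deriv f (-x) = - deriv f x := by
  have h := deriv_comp_neg f x
  have h2 : (fun x => f (-x)) = f := funext he
  rw [h2] at h
  linarith

lemma trip_min (hc : StrictConvexOn ℝ Set.univ f) (hs : ContDiff ℝ 1 f)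
    (hVt : ∀ V₁ V₂ : ℝ, 0 < V₁ → 0 < V₂ →
      deriv f (Vt V₁ V₂) + deriv f (Vt V₁ V₂ + V₁) + deriv f (Vt V₁ V₂ + V₁ + V₂) = 0)
    (p : ℝ × ℝ) (h1 : 0 < p.1) (h2 : 0 < p.2) (w : ℝ) :
    tripG f (p, Vt p.1 p.2) ≤ tripG f (p, w) := by
  have hd : Differentiable ℝ f := hs.differentiable (by norm_num)
  have a := tangent_le hc.convexOn hd (Vt p.1 p.2) w
  have b := tangent_le hc.convexOn hd (Vt p.1 p.2 + p.1) (w + p.1)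
  have c := tangent_le hc.convexOn hd (Vt p.1 p.2 + p.1 + p.2) (w + p.1 + p.2)
  have e := hVt p.1 p.2 h1 h2
  have e' : (deriv f (Vt p.1 p.2) + deriv f (Vt p.1 p.2 + p.1)
    + deriv f (Vt p.1 p.2 + p.1 + p.2)) * (w - Vt p.1 p.2) = 0 := by rw [e]; ring
  simp only [tripG]
  ring_nf at a b c e' ⊢
  linarith

lemma Vt_cont (hc : StrictConvexOn ℝ Set.univ f) (hs : ContDiff ℝ 1 f)
    (hVt : ∀ V₁ V₂ : ℝ, 0 < V₁ → 0 < V₂ →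
      deriv f (Vt V₁ V₂) + deriv f (Vt V₁ V₂ + V₁) + deriv f (Vt V₁ V₂ + V₁ + V₂) = 0)
    (p : ℝ × ℝ) (h1 : 0 < p.1) (h2 : 0 < p.2) :
    ContinuousAt (fun p : ℝ × ℝ => Vt p.1 p.2) p := by
  have hm := deriv_strictMono hc hs
  have hg : Continuous (deriv f) := hs.continuous_deriv (by norm_num)
  have e := hVt p.1 p.2 h1 h2
  have hpos : ∀ᶠ q : ℝ × ℝ in 𝓝 p, 0 < q.1 ∧ 0 < q.2 :=
    (continuous_fst.continuousAt.eventually (lt_mem_nhds h1)).and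
      (continuous_snd.continuousAt.eventually (lt_mem_nhds h2))
  have hk : ∀ w : ℝ, Continuous (fun q : ℝ × ℝ => deriv f w + deriv f (w + q.1)
      + deriv f (w + q.1 + q.2)) := fun w => by fun_prop
  refine tendsto_order.2 ⟨fun a ha => ?_, fun b hb => ?_⟩
  · have : deriv f a + deriv f (a + p.1) + deriv f (a + p.1 + p.2) < 0 := by
      have i1 := hm ha
      have i2 := hm (show a + p.1 < Vt p.1 p.2 + p.1 by linarith)
      have i3 := hm (show a + p.1 + p.2 < Vt p.1 p.2 + p.1 + p.2 by linarith)
      linarith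
    filter_upwards [hpos, (hk a).continuousAt.eventually (gt_mem_nhds this)] with q hq hq2
    by_contra hcon
    push Not at hcon
    have e' := hVt q.1 q.2 hq.1 hq.2
    have i1 := hm.monotone hcon
    have i2 := hm.monotone (show Vt q.1 q.2 + q.1 ≤ a + q.1 by linarith)
    have i3 := hm.monotone (show Vt q.1 q.2 + q.1 + q.2 ≤ a + q.1 + q.2 by linarith)
    linarith
  · have : 0 < deriv f b + deriv f (b + p.1) + deriv f (b + p.1 + p.2) := by
      have i1 := hm hb
      have i2 := hm (show Vt p.1 p.2 + p.1 < b + p.1 by linarith)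
      have i3 := hm (show Vt p.1 p.2 + p.1 + p.2 < b + p.1 + p.2 by linarith)
      linarith
    filter_upwards [hpos, (hk b).continuousAt.eventually (lt_mem_nhds this)] with q hq hq2
    by_contra hcon
    push Not at hcon
    have e' := hVt q.1 q.2 hq.1 hq.2
    have i1 := hm.monotone hcon
    have i2 := hm.monotone (show b + q.1 ≤ Vt q.1 q.2 + q.1 by linarith)
    have i3 := hm.monotone (show b + q.1 + q.2 ≤ Vt q.1 q.2 + q.1 + q.2 by linarith)
    linarith

lemma tripG_strict (hs : ContDiff ℝ 1 f)
    (hVt : ∀ V₁ V₂ : ℝ, 0 < V₁ → 0 < V₂ →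
      deriv f (Vt V₁ V₂) + deriv f (Vt V₁ V₂ + V₁) + deriv f (Vt V₁ V₂ + V₁ + V₂) = 0)
    (p : ℝ × ℝ) (h1 : 0 < p.1) (h2 : 0 < p.2) :
    HasStrictFDerivAt (tripG f)
      ((tripD f Vt p).comp (ContinuousLinearMap.fst ℝ (ℝ × ℝ) ℝ)) (p, Vt p.1 p.2) := by
  have hd : ∀ x, HasStrictDerivAt f (deriv f x) x := fun x =>
    hs.contDiffAt.hasStrictDerivAt (by norm_num)
  have e := hVt p.1 p.2 h1 h2
  set z : (ℝ × ℝ) × ℝ := (p, Vt p.1 p.2) with hz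
  have s0 : HasStrictFDerivAt (fun q : (ℝ × ℝ) × ℝ => q.2)
    (ContinuousLinearMap.snd ℝ (ℝ × ℝ) ℝ) z := hasStrictFDerivAt_snd
  have s1 : HasStrictFDerivAt (fun q : (ℝ × ℝ) × ℝ => q.1.1)
    ((ContinuousLinearMap.fst ℝ ℝ ℝ).comp (ContinuousLinearMap.fst ℝ (ℝ × ℝ) ℝ)) z :=
    ((ContinuousLinearMap.fst ℝ ℝ ℝ).comp (ContinuousLinearMap.fst ℝ (ℝ × ℝ) ℝ)).hasStrictFDerivAt
  have s2 : HasStrictFDerivAt (fun q : (ℝ × ℝ) × ℝ => q.1.2)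
    ((ContinuousLinearMap.snd ℝ ℝ ℝ).comp (ContinuousLinearMap.fst ℝ (ℝ × ℝ) ℝ)) z :=
    ((ContinuousLinearMap.snd ℝ ℝ ℝ).comp (ContinuousLinearMap.fst ℝ (ℝ × ℝ) ℝ)).hasStrictFDerivAt
  have t0 := (hd z.2).comp_hasStrictFDerivAt z s0
  have t1 := (hd (z.2 + z.1.1)).comp_hasStrictFDerivAt z (s0.add s1)
  have t2 := (hd (z.2 + z.1.1 + z.1.2)).comp_hasStrictFDerivAt z ((s0.add s1).add s2)
  have t := (t0.add t1).add t2
  refine HasStrictFDerivAt.congr_fderiv (f := tripG f) t ?_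
  ext ⟨a, b⟩
  all_goals simp [tripD, hz]
  all_goals linarith

lemma trip_strict (hc : StrictConvexOn ℝ Set.univ f) (hs : ContDiff ℝ 1 f)
    (hVt : ∀ V₁ V₂ : ℝ, 0 < V₁ → 0 < V₂ →
      deriv f (Vt V₁ V₂) + deriv f (Vt V₁ V₂ + V₁) + deriv f (Vt V₁ V₂ + V₁ + V₂) = 0)
    (p : ℝ × ℝ) (h1 : 0 < p.1) (h2 : 0 < p.2) :
    HasStrictFDerivAt (fun p : ℝ × ℝ => tripG f (p, Vt p.1 p.2)) (tripD f Vt p) p := by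
  have hG := tripG_strict hs hVt p h1 h2
  have hv := Vt_cont hc hs hVt p h1 h2
  rw [hasStrictFDerivAt_iff_isLittleO, isLittleO_iff] at hG ⊢
  intro c hcpos
  have hG := hG hcpos
  have hpos : ∀ᶠ q : ℝ × ℝ in 𝓝 p, 0 < q.1 ∧ 0 < q.2 :=
    (continuous_fst.continuousAt.eventually (lt_mem_nhds h1)).and
      (continuous_snd.continuousAt.eventually (lt_mem_nhds h2))
  have hfst : Tendsto (fun a : (ℝ × ℝ) × (ℝ × ℝ) => a.1) (𝓝 (p, p)) (𝓝 p) :=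
    continuous_fst.continuousAt
  have hsnd : Tendsto (fun a : (ℝ × ℝ) × (ℝ × ℝ) => a.2) (𝓝 (p, p)) (𝓝 p) :=
    continuous_snd.continuousAt
  have hv1 : Tendsto (fun a : (ℝ × ℝ) × (ℝ × ℝ) => Vt a.1.1 a.1.2) (𝓝 (p, p)) (𝓝 (Vt p.1 p.2)) :=
    hv.tendsto.comp hfst
  have hv2 : Tendsto (fun a : (ℝ × ℝ) × (ℝ × ℝ) => Vt a.2.1 a.2.2) (𝓝 (p, p)) (𝓝 (Vt p.1 p.2)) :=
    hv.tendsto.comp hsnd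
  have k1 := ((hfst.prodMk_nhds hv1).prodMk_nhds (hsnd.prodMk_nhds hv1)).eventually hG
  have k2 := ((hfst.prodMk_nhds hv2).prodMk_nhds (hsnd.prodMk_nhds hv2)).eventually hG
  filter_upwards [k1, k2, hfst.eventually hpos, hsnd.eventually hpos] with a ha1 ha2 hp1 hp2
  have m1 := trip_min hc hs hVt a.1 hp1.1 hp1.2 (Vt a.2.1 a.2.2)
  have m2 := trip_min hc hs hVt a.2 hp2.1 hp2.2 (Vt a.1.1 a.1.2)
  have hn : ∀ x : ℝ × ℝ, ‖((x, 0) : (ℝ × ℝ) × ℝ)‖ = ‖x‖ := fun x => by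
    rw [Prod.norm_def]; simp
  simp only [Prod.mk_sub_mk, sub_self, hn, ContinuousLinearMap.comp_apply,
    ContinuousLinearMap.coe_fst', Real.norm_eq_abs] at ha1 ha2 ⊢
  rw [abs_le] at ha1 ha2 ⊢
  constructor <;> linarith [ha1.1, ha1.2, ha2.1, ha2.2]

lemma mu_strict (hc : StrictConvexOn ℝ Set.univ f) (hs : ContDiff ℝ 1 f)
    (hVt : ∀ V₁ V₂ : ℝ, 0 < V₁ → 0 < V₂ →
      deriv f (Vt V₁ V₂) + deriv f (Vt V₁ V₂ + V₁) + deriv f (Vt V₁ V₂ + V₁ + V₂) = 0)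
    (p : ℝ × ℝ) (h1 : 0 < p.1) (h2 : 0 < p.2) :
    HasStrictFDerivAt (fun p : ℝ × ℝ => mu f Vt p.1 p.2) (muD f Vt p) p := by
  have hd : ∀ x, HasStrictDerivAt f (deriv f x) x := fun x =>
    hs.contDiffAt.hasStrictDerivAt (by norm_num)
  have s1 : HasStrictFDerivAt (fun q : ℝ × ℝ => q.1 / 2)
      ((1 / 2 : ℝ) • ContinuousLinearMap.fst ℝ ℝ ℝ) p := by
    convert ((1 / 2 : ℝ) • ContinuousLinearMap.fst ℝ ℝ ℝ).hasStrictFDerivAt (x := p) using 2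
    simp; ring
  have s2 : HasStrictFDerivAt (fun q : ℝ × ℝ => (q.1 + q.2) / 2)
      ((1 / 2 : ℝ) • (ContinuousLinearMap.fst ℝ ℝ ℝ + ContinuousLinearMap.snd ℝ ℝ ℝ)) p := by
    convert ((1 / 2 : ℝ) • (ContinuousLinearMap.fst ℝ ℝ ℝ
      + ContinuousLinearMap.snd ℝ ℝ ℝ)).hasStrictFDerivAt (x := p) using 2
    simp; ring
  have t1 := ((hd (p.1 / 2)).comp_hasStrictFDerivAt p s1).const_mul 2
  have t2 := ((hd ((p.1 + p.2) / 2)).comp_hasStrictFDerivAt p s2).const_mul 2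
  have t := (t1.add t2).sub (trip_strict hc hs hVt p h1 h2)
  have hfun : (fun p : ℝ × ℝ => mu f Vt p.1 p.2) = fun p : ℝ × ℝ =>
      2 * f (p.1 / 2) + 2 * f ((p.1 + p.2) / 2) - tripG f (p, Vt p.1 p.2) := by
    funext q; simp only [mu, tripG]; ring
  rw [hfun]
  refine HasStrictFDerivAt.congr_fderiv t ?_
  ext
  all_goals simp [muD]
  all_goals ring

lemma mu_contDiffAt (hc : StrictConvexOn ℝ Set.univ f) (hs : ContDiff ℝ 1 f)
    (hVt : ∀ V₁ V₂ : ℝ, 0 < V₁ → 0 < V₂ →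
      deriv f (Vt V₁ V₂) + deriv f (Vt V₁ V₂ + V₁) + deriv f (Vt V₁ V₂ + V₁ + V₂) = 0)
    (p : ℝ × ℝ) (h1 : 0 < p.1) (h2 : 0 < p.2) :
    ContDiffAt ℝ 1 (fun p : ℝ × ℝ => mu f Vt p.1 p.2) p := by
  have hg : Continuous (deriv f) := hs.continuous_deriv (by norm_num)
  refine contDiffAt_one_iff.2 ⟨muD f Vt, {q | 0 < q.1 ∧ 0 < q.2}, ?_, ?_, fun q hq =>
    (mu_strict hc hs hVt q hq.1 hq.2).hasFDerivAt⟩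
  · exact (continuous_fst.continuousAt.eventually (lt_mem_nhds h1)).and
      (continuous_snd.continuousAt.eventually (lt_mem_nhds h2))
  · intro q hq
    apply ContinuousAt.continuousWithinAt
    have hv := Vt_cont hc hs hVt q hq.1 hq.2
    have c1 : ContinuousAt (fun p : ℝ × ℝ => deriv f (Vt p.1 p.2 + p.1)) q :=
      hg.continuousAt.comp (f := fun p : ℝ × ℝ => Vt p.1 p.2 + p.1) (hv.add continuousAt_fst)
    have c2 : ContinuousAt (fun p : ℝ × ℝ => deriv f (Vt p.1 p.2 + p.1 + p.2)) q :=
      hg.continuousAt.comp (f := fun p : ℝ × ℝ => Vt p.1 p.2 + p.1 + p.2)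
        ((hv.add continuousAt_fst).add continuousAt_snd)
    have c3 : ContinuousAt (fun p : ℝ × ℝ => deriv f (p.1 / 2)) q := by fun_prop
    have c4 : ContinuousAt (fun p : ℝ × ℝ => deriv f ((p.1 + p.2) / 2)) q := by fun_prop
    unfold muD tripD
    exact ((c3.smul continuousAt_const).add (c4.smul continuousAt_const)).sub
      (((c1.add c2).smul continuousAt_const).add (c2.smul continuousAt_const))

/-- location of the equilibrium point -/
lemma Vt_gt (he : ∀ x, f (-x) = f x) (hc : StrictConvexOn ℝ Set.univ f) (hs : ContDiff ℝ 1 f)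
    (hVt : ∀ V₁ V₂ : ℝ, 0 < V₁ → 0 < V₂ →
      deriv f (Vt V₁ V₂) + deriv f (Vt V₁ V₂ + V₁) + deriv f (Vt V₁ V₂ + V₁ + V₂) = 0)
    {a b : ℝ} (ha : 0 < a) (hab : a < b) : -((a + b) / 2) < Vt a b := by
  have hm := deriv_strictMono hc hs
  have e := hVt a b ha (ha.trans hab)
  by_contra hcon
  push Not at hcon
  have i1 := hm.monotone hcon
  have i2 := hm (show Vt a b + a < 0 by linarith)
  have i3 := hm.monotone (show Vt a b + a + b ≤ (a + b) / 2 by linarith)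
  have o1 := deriv_odd he ((a + b) / 2)
  have o2 := deriv_odd he 0
  simp only [neg_zero] at o2
  linarith

lemma muD_snd (he : ∀ x, f (-x) = f x) (hc : StrictConvexOn ℝ Set.univ f) (hs : ContDiff ℝ 1 f)
    (hVt : ∀ V₁ V₂ : ℝ, 0 < V₁ → 0 < V₂ →
      deriv f (Vt V₁ V₂) + deriv f (Vt V₁ V₂ + V₁) + deriv f (Vt V₁ V₂ + V₁ + V₂) = 0)
    {a b : ℝ} (ha : 0 < a) (hab : a < b) : muD f Vt (a, b) (0, 1) < 0 := by
  have hm := deriv_strictMono hc hs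
  have := Vt_gt he hc hs hVt ha hab
  have := hm (show (a + b) / 2 < Vt a b + a + b by linarith)
  simp [muD, tripD]
  linarith

lemma muD_fst (he : ∀ x, f (-x) = f x) (hc : StrictConvexOn ℝ Set.univ f) (hs : ContDiff ℝ 1 f)
    (hVt : ∀ V₁ V₂ : ℝ, 0 < V₁ → 0 < V₂ →
      deriv f (Vt V₁ V₂) + deriv f (Vt V₁ V₂ + V₁) + deriv f (Vt V₁ V₂ + V₁ + V₂) = 0)
    {a b : ℝ} (ha : 0 < a) (hab : a < b) : 0 < muD f Vt (a, b) (1, 0) := by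
  have hm := deriv_strictMono hc hs
  have := Vt_gt he hc hs hVt ha hab
  have := hm this
  have o1 := deriv_odd he ((a + b) / 2)
  have o2 := deriv_odd he 0
  simp only [neg_zero] at o2
  have := hm (show 0 < a / 2 by linarith)
  have e := hVt a b ha (ha.trans hab)
  simp [muD, tripD]
  linarith

lemma mu_anti (he : ∀ x, f (-x) = f x) (hc : StrictConvexOn ℝ Set.univ f) (hs : ContDiff ℝ 1 f)
    (hVt : ∀ V₁ V₂ : ℝ, 0 < V₁ → 0 < V₂ →
      deriv f (Vt V₁ V₂) + deriv f (Vt V₁ V₂ + V₁) + deriv f (Vt V₁ V₂ + V₁ + V₂) = 0)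
    {a : ℝ} (ha : 0 < a) : StrictAntiOn (fun b => mu f Vt a b) (Ici a) := by
  have hder : ∀ b, a ≤ b → HasDerivAt (fun b => mu f Vt a b) (muD f Vt (a, b) (0, 1)) b := by
    intro b hb
    have := (mu_strict hc hs hVt (a, b) ha (ha.trans_le hb)).hasFDerivAt
    exact this.comp_hasDerivAt b ((hasDerivAt_const b a).prodMk (hasDerivAt_id b))
  refine strictAntiOn_of_deriv_neg (convex_Ici a)
    (fun b hb => (hder b hb).continuousAt.continuousWithinAt) fun b hb => ?_
  rw [interior_Ici] at hb
  rw [(hder b (le_of_lt hb)).deriv]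
  exact muD_snd he hc hs hVt ha hb

lemma mu_mono (he : ∀ x, f (-x) = f x) (hc : StrictConvexOn ℝ Set.univ f) (hs : ContDiff ℝ 1 f)
    (hVt : ∀ V₁ V₂ : ℝ, 0 < V₁ → 0 < V₂ →
      deriv f (Vt V₁ V₂) + deriv f (Vt V₁ V₂ + V₁) + deriv f (Vt V₁ V₂ + V₁ + V₂) = 0)
    {b : ℝ} (hb : 0 < b) : StrictMonoOn (fun a => mu f Vt a b) (Ioc 0 b) := by
  have hder : ∀ a, 0 < a → HasDerivAt (fun a => mu f Vt a b) (muD f Vt (a, b) (1, 0)) a := by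
    intro a ha
    have := (mu_strict hc hs hVt (a, b) ha hb).hasFDerivAt
    exact this.comp_hasDerivAt a ((hasDerivAt_id a).prodMk (hasDerivAt_const a b))
  refine strictMonoOn_of_deriv_pos (convex_Ioc 0 b)
    (fun a ha => (hder a ha.1).continuousAt.continuousWithinAt) fun a ha => ?_
  rw [interior_Ioc] at ha
  rw [(hder a ha.1).deriv]
  exact muD_fst he hc hs hVt ha.1 ha.2

end

/-- Assume V₀ > 0, and let λ : (0, V₀) → ℝ be the tie function
assigning to each V₁ ∈ (0, V₀) the unique λ(V₁) > V₁ with μ(V₁, λ(V₁)) = 0. Then λ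
is strictly increasing, continuously differentiable, and tends to a finite positive
limit as V₁ → 0⁺. -/
theorem stmt_13 (f : ℝ → ℝ)
    (hf_even : ∀ x, f (-x) = f x)
    (hf_conv : StrictConvexOn ℝ Set.univ f)
    (hf_smooth : ContDiff ℝ 1 f)
    (hf_pos : ∀ x, 0 < f x)
    (Vt : ℝ → ℝ → ℝ)
    (hVt : ∀ V₁ V₂ : ℝ, 0 < V₁ → 0 < V₂ →
      deriv f (Vt V₁ V₂) + deriv f (Vt V₁ V₂ + V₁) + deriv f (Vt V₁ V₂ + V₁ + V₂) = 0)
    (hV₀pos : (blowupSet f Vt).Nonempty)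
    (lam : ℝ → ℝ)
    (hlam : ∀ V₁ ∈ tieDomain f Vt, V₁ < lam V₁ ∧ mu f Vt V₁ (lam V₁) = 0) :
    StrictMonoOn lam (tieDomain f Vt) ∧
    ContDiffOn ℝ 1 lam (tieDomain f Vt) ∧
    ∃ c : ℝ, 0 < c ∧ Tendsto lam (nhdsWithin 0 (Set.Ioi 0)) (nhds c) := by
  have hanti : ∀ {a : ℝ}, 0 < a → StrictAntiOn (fun b => mu f Vt a b) (Ici a) :=
    fun ha => mu_anti hf_even hf_conv hf_smooth hVt ha
  have hmono : ∀ {b : ℝ}, 0 < b → StrictMonoOn (fun a => mu f Vt a b) (Ioc 0 b) :=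
    fun hb => mu_mono hf_even hf_conv hf_smooth hVt hb
  have hdown : ∀ {s t : ℝ}, t ∈ tieDomain f Vt → 0 < s → s ≤ t → s ∈ tieDomain f Vt := by
    rintro s t ⟨_, W, hW, htW⟩ hs hst
    exact ⟨hs, W, hW, hst.trans_lt htW⟩
  have hopen : IsOpen (tieDomain f Vt) := by
    rw [isOpen_iff_mem_nhds]
    rintro t ⟨ht, W, hW, htW⟩
    filter_upwards [Ioo_mem_nhds ht htW] with x hx
    exact ⟨hx.1, W, hW, hx.2⟩
  have hlamMono : StrictMonoOn lam (tieDomain f Vt) := by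
    intro a ha b hb hab
    by_contra hcon
    push Not at hcon
    obtain ⟨ha1, ha2⟩ := hlam a ha
    obtain ⟨hb1, hb2⟩ := hlam b hb
    have hb0 : 0 < lam b := hb.1.trans hb1
    have k1 := hmono hb0 (show a ∈ Ioc 0 (lam b) from ⟨ha.1, (hab.trans hb1).le⟩)
      (show b ∈ Ioc 0 (lam b) from ⟨hb.1, hb1.le⟩) hab
    have k2 := (hanti ha.1).antitoneOn (show lam b ∈ Ici a from (hab.trans hb1).le)
      (show lam a ∈ Ici a from ha1.le) hcon
    simp only at k1 k2
    linarith
  refine ⟨hlamMono, ?_, ?_⟩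
  · intro x hx
    apply ContDiffAt.contDiffWithinAt
    obtain ⟨hx1, hx2⟩ := hlam x hx
    have hx0 : 0 < x := hx.1
    have cdf := mu_contDiffAt hf_conv hf_smooth hVt (x, lam x) hx0 (hx0.trans hx1)
    have hfd := (mu_strict hf_conv hf_smooth hVt (x, lam x) hx0 (hx0.trans hx1)).hasFDerivAt.fderiv
    have hneg := muD_snd hf_even hf_conv hf_smooth hVt hx0 hx1
    have hinv : (fderiv ℝ (fun p : ℝ × ℝ => mu f Vt p.1 p.2) (x, lam x) ∘L
        .inr ℝ ℝ ℝ).IsInvertible := by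
      rw [hfd]
      refine ⟨ContinuousLinearEquiv.unitsEquivAut ℝ (Units.mk0 _ hneg.ne), ?_⟩
      ext
      simp
    have hψ := cdf.contDiffAt_implicitFunction one_ne_zero hinv
    have hψ0 := cdf.implicitFunction_apply_self one_ne_zero hinv
    have hψe := cdf.eventually_apply_implicitFunction one_ne_zero hinv
    set ψ := cdf.implicitFunction one_ne_zero hinv
    simp only at hψ hψ0 hψe
    refine hψ.congr_of_eventuallyEq ?_
    have hgt : ∀ᶠ y in 𝓝 x, y < ψ y := by
      refine continuousAt_id.eventually_lt hψ.continuousAt ?_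
      rw [hψ0]; exact hx1
    filter_upwards [hψe, hgt, hopen.mem_nhds hx] with y h1 h2 hy
    obtain ⟨hy1, hy2⟩ := hlam y hy
    refine (hanti hy.1).injOn (show lam y ∈ Ici y from hy1.le) (show ψ y ∈ Ici y from h2.le) ?_
    rw [h1, hx2, hy2]
  · obtain ⟨W, hW⟩ := hV₀pos
    have hW0 : 0 < W := hW.1
    have hT : W / 2 ∈ tieDomain f Vt := ⟨by linarith, W, hW, by linarith⟩
    obtain ⟨ε, hε, hlow⟩ : ∃ ε > 0, ∀ t ∈ tieDomain f Vt, t < ε → ε ≤ lam t := by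
      have hcf : Continuous f := hf_smooth.continuous
      have hk : Continuous (fun p : ℝ × ℝ => 2 * f (p.1 / 2) + 2 * f ((p.1 + p.2) / 2)
        - f 0 - f p.1 - f (p.1 + p.2)) := by fun_prop
      have h0 : 0 < (fun p : ℝ × ℝ => 2 * f (p.1 / 2) + 2 * f ((p.1 + p.2) / 2)
        - f 0 - f p.1 - f (p.1 + p.2)) (0, 0) := by
        have := hf_pos 0
        simp
        linarith
      have hev := hk.continuousAt.eventually (lt_mem_nhds h0)
      obtain ⟨ε, hε, h⟩ := Metric.eventually_nhds_iff.1 hev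
      refine ⟨ε, hε, fun t ht hte => ?_⟩
      by_contra hcon
      push Not at hcon
      obtain ⟨ht1, ht2⟩ := hlam t ht
      have ht0 := ht.1
      have hl0 : 0 < lam t := ht0.trans ht1
      have k := @h (t, lam t) (by
        rw [Prod.dist_eq]
        simp [abs_of_pos ht0, abs_of_pos hl0, hte, hcon])
      have m := trip_min hf_conv hf_smooth hVt (t, lam t) ht0 hl0 0
      simp only [tripG, mu, zero_add] at k m ht2
      linarith
    have hbdd : ∀ t ∈ tieDomain f Vt, ε ≤ lam t := by
      intro t ht
      have hs0 : 0 < min t (ε / 2) := lt_min ht.1 (by linarith)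
      have hs := hdown ht hs0 (min_le_left _ _)
      exact (hlow _ hs ((min_le_right _ _).trans_lt (by linarith))).trans
        (hlamMono.monotoneOn hs ht (min_le_left _ _))
    have hne : (lam '' tieDomain f Vt).Nonempty := ⟨_, _, hT, rfl⟩
    have hlb : ε ∈ lowerBounds (lam '' tieDomain f Vt) := by
      rintro _ ⟨t, ht, rfl⟩; exact hbdd t ht
    refine ⟨sInf (lam '' tieDomain f Vt), hε.trans_le (le_csInf hne hlb), ?_⟩
    refine tendsto_order.2 ⟨fun a ha => ?_, fun b hb => ?_⟩
    · filter_upwards [Ioo_mem_nhdsGT hT.1] with x hx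
      exact ha.trans_le (csInf_le ⟨ε, hlb⟩ ⟨x, hdown hT hx.1 hx.2.le, rfl⟩)
    · obtain ⟨_, ⟨t, ht, rfl⟩, htb⟩ := exists_lt_of_csInf_lt hne hb
      filter_upwards [Ioo_mem_nhdsGT ht.1] with x hx
      exact (hlamMono (hdown ht hx.1 hx.2.le) ht hx.2).trans htb
end

section
/- The following are equivalent: (i) for every V₁ > 0 there exists V₂ ≥ V₁ with μ(V₁, V₂) < 0 (that is, the blowup time V₀ is infinite); (ii) f(2V) − 2f(V) → ∞ as V → ∞ (that is, M = ∞). In particular, if f'(V) → ∞ as V → ∞ then V₀ = ∞. -/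
open Filter Set

/-- The following are equivalent: (i) for every V₁ > 0 there exists
V₂ ≥ V₁ with μ(V₁, V₂) < 0 (that is, the blowup time V₀ is infinite);
(ii) f(2V) − 2f(V) → ∞ as V → ∞ (that is, M = ∞). In particular, if f'(V) → ∞ as
V → ∞ then V₀ = ∞. -/
theorem stmt_15 (f : ℝ → ℝ)
    (hf_even : ∀ x, f (-x) = f x)
    (hf_conv : StrictConvexOn ℝ Set.univ f)
    (hf_smooth : ContDiff ℝ 1 f)
    (hf_pos : ∀ x, 0 < f x)
    (Vt : ℝ → ℝ → ℝ)
    (hVt : ∀ V₁ V₂ : ℝ, 0 < V₁ → 0 < V₂ →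
      deriv f (Vt V₁ V₂) + deriv f (Vt V₁ V₂ + V₁) + deriv f (Vt V₁ V₂ + V₁ + V₂) = 0) :
    ((∀ V₁ : ℝ, 0 < V₁ → ∃ V₂ : ℝ, V₁ ≤ V₂ ∧ mu f Vt V₁ V₂ < 0) ↔
      Tendsto (fun V : ℝ => f (2 * V) - 2 * f V) atTop atTop) ∧
    (Tendsto (deriv f) atTop atTop →
      ∀ V₁ : ℝ, 0 < V₁ → ∃ V₂ : ℝ, V₁ ≤ V₂ ∧ mu f Vt V₁ V₂ < 0) := by
  have hd : Differentiable ℝ f := hf_smooth.differentiable (by norm_num)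
  have hg : StrictMono (deriv f) := by
    have h := hf_conv.strictMonoOn_deriv (fun x _ => hd x)
    intro x y hxy
    exact h (by simp) (by simp) hxy
  have tan : ∀ x y, f x + deriv f x * (y - x) ≤ f y := by
    intro x y
    have hc := hf_conv.convexOn
    rcases lt_trichotomy x y with h | h | h
    · have := hc.deriv_le_slope (mem_univ x) (mem_univ y) h (hd x)
      rw [slope_def_field, le_div_iff₀ (by linarith)] at this
      linarith
    · subst h; simp
    · have := hc.slope_le_deriv (mem_univ y) (mem_univ x) h (hd x)
      rw [slope_def_field, div_le_iff₀ (by linarith)] at this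
      linarith
  have g0 : deriv f 0 = 0 := by
    have h1 := deriv_comp_neg (f := f) (0 : ℝ)
    have h2 : (fun x => f (-x)) = f := funext hf_even
    rw [h2, neg_zero] at h1
    linarith
  have g1 : 0 < deriv f 1 := by
    rw [← g0]; exact hg (by norm_num)
  have gnn : ∀ x, 0 ≤ x → 0 ≤ deriv f x := by
    intro x hx
    rw [← g0]; exact hg.monotone hx
  -- the common part of the implications towards (i)
  have key : ∀ V₁ : ℝ, 0 < V₁ → ∃ A : ℝ, 0 < A ∧ ∀ V₂, A ≤ - Vt V₁ V₂ → mu f Vt V₁ V₂ < 0 := by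
    intro V₁ hV₁
    have hK := hf_pos (V₁ / 2)
    refine ⟨V₁ + 2 + 2 * f (V₁ / 2) / deriv f 1, by positivity, ?_⟩
    intro V₂ hA
    unfold mu
    set t := Vt V₁ V₂
    have e1 := tan ((V₁ + V₂) / 2) (-t)
    have e2 := tan ((V₁ + V₂) / 2) (t + V₁ + V₂)
    have e3 := tan 1 (-(t + V₁))
    rw [hf_even] at e1 e3
    have e4 : 2 * f (V₁ / 2) / deriv f 1 < -(t + V₁) - 1 := by linarith
    rw [div_lt_iff₀ g1] at e4
    have := hf_pos 1
    nlinarith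
  have unb : Tendsto (deriv f) atTop atTop →
      ∀ V₁ : ℝ, 0 < V₁ → ∃ V₂ : ℝ, V₁ ≤ V₂ ∧ mu f Vt V₁ V₂ < 0 := by
    intro hT V₁ hV₁
    obtain ⟨A, hA, hmu⟩ := key V₁ hV₁
    obtain ⟨X, hX⟩ := (hT.eventually_gt_atTop (2 * deriv f A)).exists
    refine ⟨max V₁ (X + A), le_max_left _ _, ?_⟩
    apply hmu
    set V₂ := max V₁ (X + A) with hV
    have h1 : V₁ ≤ V₂ := le_max_left _ _
    have h2 : X + A ≤ V₂ := le_max_right _ _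
    by_contra hlt
    push Not at hlt
    have he := hVt V₁ V₂ hV₁ (by linarith)
    set t := Vt V₁ V₂
    have a1 : deriv f (-A) ≤ deriv f t := hg.monotone (by linarith)
    have a2 : deriv f (-A) ≤ deriv f (t + V₁) := hg.monotone (by linarith)
    have a3 : deriv f X ≤ deriv f (t + V₁ + V₂) := hg.monotone (by linarith)
    have h3 := deriv_comp_neg (f := f) A
    have h4 : (fun x => f (-x)) = f := funext hf_even
    rw [h4] at h3
    linarith
  refine ⟨⟨?_, ?_⟩, unb⟩
  · intro hi
    by_contra hT
    rw [tendsto_atTop_atTop] at hT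
    push Not at hT
    obtain ⟨M, hM⟩ := hT
    set V₁ := 1 + (3 * f 0 + 4 * |M|) / deriv f 1 with hV1
    have hf0 := hf_pos 0
    have hV₁ : 1 ≤ V₁ := by
      have : 0 ≤ (3 * f 0 + 4 * |M|) / deriv f 1 := by positivity
      linarith
    have hV₁' : 3 * f 0 + 4 * |M| ≤ V₁ * deriv f 1 := by
      rw [← div_le_iff₀ g1]; linarith
    obtain ⟨V₂, h12, hmu⟩ := hi V₁ (by linarith)
    obtain ⟨V, hV, hVM⟩ := hM (V₁ + V₂)
    have low : ∀ y, deriv f V * y - M ≤ f y := by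
      intro y
      have := tan V y
      have := tan V (2 * V)
      nlinarith
    have he := hVt V₁ V₂ (by linarith) (by linarith)
    unfold mu at hmu
    set t := Vt V₁ V₂
    have m1 := tan t (-V₁)
    have m2 := tan (t + V₁) 0
    have m3 := tan (t + V₁ + V₂) V₂
    have hmin : f t + f (t + V₁) + f (t + V₁ + V₂) ≤ f V₁ + f 0 + f V₂ := by
      rw [hf_even] at m1
      have : (deriv f t + deriv f (t + V₁) + deriv f (t + V₁ + V₂)) * (-V₁ - t) = 0 := by
        rw [he, zero_mul]
      nlinarith
    have up : ∀ y, 0 ≤ y → y ≤ V → f y ≤ f 0 + deriv f V * y := by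
      intro y h0 hy
      have h1 := tan y 0
      have h2 := mul_le_mul_of_nonneg_right (hg.monotone hy) h0
      linarith
    have u1 := up V₁ (by linarith) (by linarith)
    have u2 := up V₂ (by linarith) (by linarith)
    have l1 := low (V₁ / 2)
    have l2 := low ((V₁ + V₂) / 2)
    have hgV : deriv f 1 * V₁ ≤ deriv f V * V₁ :=
      mul_le_mul_of_nonneg_right (hg.monotone (by linarith)) (by linarith)
    have := le_abs_self M
    nlinarith
  · intro hT
    by_cases hb : ∃ L, ∀ x, deriv f x ≤ L
    · obtain ⟨L, hL⟩ := hb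
      intro V₁ hV₁
      obtain ⟨A, hA, hmu⟩ := key V₁ hV₁
      obtain ⟨X, hX⟩ := (tendsto_atTop_atTop.1 hT) (2 * f (V₁ / 2) + L * A)
      set V₂ := max V₁ (max (2 * X) A) with hV
      have h1 : V₁ ≤ V₂ := le_max_left _ _
      have h2 : 2 * X ≤ V₂ := (le_max_left _ _).trans (le_max_right _ _)
      have h3 : A ≤ V₂ := (le_max_right _ _).trans (le_max_right _ _)
      refine ⟨V₂, h1, ?_⟩
      by_cases hlt : A ≤ - Vt V₁ V₂
      · exact hmu _ hlt
      push Not at hlt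
      unfold mu
      set t := Vt V₁ V₂
      have b1 := hX ((V₁ + V₂) / 2) (by linarith)
      have b2 : 2 * ((V₁ + V₂) / 2) = V₁ + V₂ := by ring
      rw [b2] at b1
      have c1 := tan (V₁ + V₂) (V₁ + V₂ - A)
      have c2 := tan (V₁ + V₂ - A) (t + V₁ + V₂)
      have c3 : 0 ≤ deriv f (V₁ + V₂ - A) * (t + V₁ + V₂ - (V₁ + V₂ - A)) :=
        mul_nonneg (gnn _ (by linarith)) (by linarith)
      have c4 := mul_le_mul_of_nonneg_right (hL (V₁ + V₂)) hA.le
      have := hf_pos t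
      have := hf_pos (t + V₁)
      nlinarith
    · apply unb
      push Not at hb
      apply tendsto_atTop_atTop_of_monotone hg.monotone
      intro b
      obtain ⟨x, hx⟩ := hb b
      exact ⟨x, hx.le⟩
end

section
/- The following are equivalent: (i) μ(V₁, V₂) > 0 for all 0 < V₁ ≤ V₂ (that is, the blowup time V₀ is zero, so the double interval strictly beats the triple interval for all prescribed volumes); (ii) L = lim_{V→∞} f'(V) is finite, M = lim_{V→∞} (f(2V) − 2f(V)) is finite, and 2f(0) − 2f(V̄) + V̄·L − M ≥ 0, where V̄ is the unique real number with f'(V̄) = L/2. -/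
open Filter Set

theorem aux_tangent (f : ℝ → ℝ) (hd : Differentiable ℝ f) (hg : StrictMono (deriv f)) (x y : ℝ) :
    f x + deriv f x * (y - x) ≤ f y := by
  rcases lt_trichotomy x y with h | h | h
  · obtain ⟨c, hc, hc2⟩ := exists_deriv_eq_slope f h hd.continuous.continuousOn
      hd.differentiableOn
    have h1 := hg hc.1
    rw [hc2, lt_div_iff₀ (by linarith)] at h1
    linarith
  · subst h; simp
  · obtain ⟨c, hc, hc2⟩ := exists_deriv_eq_slope f h hd.continuous.continuousOn
      hd.differentiableOn
    have h1 := hg hc.2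
    rw [hc2, div_lt_iff₀ (by linarith)] at h1
    linarith

theorem aux_incr (f : ℝ → ℝ) (hd : Differentiable ℝ f) (hg : StrictMono (deriv f)) (a b d : ℝ)
    (hab : a ≤ b) (hdd : 0 ≤ d) : f (a + d) - f a ≤ f (b + d) - f b := by
  have hm : Monotone (fun u => f (u + d) - f u) := by
    have hD : ∀ u, HasDerivAt (fun u => f (u + d) - f u) (deriv f (u + d) - deriv f u) u := by
      intro u
      exact ((hd (u + d)).hasDerivAt.comp_add_const u d).sub (hd u).hasDerivAt
    apply monotone_of_deriv_nonneg (fun u => (hD u).differentiableAt)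
    intro u
    rw [(hD u).deriv]
    have := hg.monotone (show u ≤ u + d by linarith)
    linarith
  exact hm hab

theorem aux_phi (f : ℝ → ℝ) (hd : Differentiable ℝ f) (hg : StrictMono (deriv f)) (t : ℝ) :
    StrictMonoOn (fun u => f (2 * u + t) - 2 * f u) (Set.Ici (-t)) := by
  have hD : ∀ u, HasDerivAt (fun u => f (2 * u + t) - 2 * f u)
      (deriv f (2 * u + t) * 2 - 2 * deriv f u) u := by
    intro u
    have h1 : HasDerivAt (fun u : ℝ => 2 * u + t) 2 u := by
      simpa using ((hasDerivAt_id u).const_mul 2).add_const t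
    exact ((hd (2 * u + t)).hasDerivAt.comp u h1).sub ((hd u).hasDerivAt.const_mul 2)
  apply strictMonoOn_of_deriv_pos (convex_Ici _)
  · exact fun u _ => (hD u).continuousAt.continuousWithinAt
  · intro u hu
    rw [interior_Ici] at hu
    rw [(hD u).deriv]
    have := hg (show u < 2 * u + t by have := Set.mem_Ioi.1 hu; linarith)
    linarith

theorem aux_lim (f : ℝ → ℝ) (hd : Differentiable ℝ f) (hg : StrictMono (deriv f)) (L M t W : ℝ)
    (hL : Tendsto (deriv f) atTop (nhds L))
    (hM : Tendsto (fun V : ℝ => f (2 * V) - 2 * f V) atTop (nhds M)) (hW : -t ≤ W) :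
    f (2 * W + t) - 2 * f W < M + t * L := by
  have hφ := aux_phi f hd hg t
  have h1 : f (2 * W + t) - 2 * f W < f (2 * (W + 1) + t) - 2 * f (W + 1) :=
    hφ (show W ∈ Set.Ici (-t) from hW) (show W + 1 ∈ Set.Ici (-t) by simp; linarith)
      (by linarith)
  refine lt_of_lt_of_le h1 ?_
  have ht : Tendsto (fun u : ℝ => 2 * u + t) atTop atTop :=
    tendsto_atTop_add_const_right _ _ (tendsto_id.const_mul_atTop (by norm_num))
  refine ge_of_tendsto (hM.add ((hL.comp ht).const_mul t)) ?_
  filter_upwards [eventually_ge_atTop (W + 1)] with u hu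
  have h2 : f (2 * (W + 1) + t) - 2 * f (W + 1) ≤ f (2 * u + t) - 2 * f u :=
    hφ.monotoneOn (show W + 1 ∈ Set.Ici (-t) by simp; linarith)
      (show u ∈ Set.Ici (-t) by simp; linarith) hu
  have h3 := aux_tangent f hd hg (2 * u + t) (2 * u)
  simp only [Function.comp]
  linarith

/-- The following are equivalent: (i) μ(V₁, V₂) > 0 for all
0 < V₁ ≤ V₂ (the blowup time V₀ is zero); (ii) L = lim_{V→∞} f'(V) is finite,
M = lim_{V→∞} (f(2V) − 2f(V)) is finite, and 2f(0) − 2f(V̄) + V̄·L − M ≥ 0, where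
V̄ is the unique real number with f'(V̄) = L/2. -/
theorem stmt_16 (f : ℝ → ℝ)
    (hf_even : ∀ x, f (-x) = f x)
    (hf_conv : StrictConvexOn ℝ Set.univ f)
    (hf_smooth : ContDiff ℝ 1 f)
    (hf_pos : ∀ x, 0 < f x)
    (Vt : ℝ → ℝ → ℝ)
    (hVt : ∀ V₁ V₂ : ℝ, 0 < V₁ → 0 < V₂ →
      deriv f (Vt V₁ V₂) + deriv f (Vt V₁ V₂ + V₁) + deriv f (Vt V₁ V₂ + V₁ + V₂) = 0) :
    (∀ V₁ V₂ : ℝ, 0 < V₁ → V₁ ≤ V₂ → 0 < mu f Vt V₁ V₂) ↔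
    (∃ L M Vbar : ℝ,
      Tendsto (deriv f) atTop (nhds L) ∧
      Tendsto (fun V : ℝ => f (2 * V) - 2 * f V) atTop (nhds M) ∧
      deriv f Vbar = L / 2 ∧
      0 ≤ 2 * f 0 - 2 * f Vbar + Vbar * L - M) := by
  have hd : Differentiable ℝ f := hf_smooth.differentiable (by norm_num)
  have hgc : Continuous (deriv f) := hf_smooth.continuous_deriv (by norm_num)
  have hg : StrictMono (deriv f) := by
    have := hf_conv.strictMonoOn_deriv (fun x _ => hd x)
    exact strictMonoOn_univ.1 this
  have hodd : ∀ x, deriv f (-x) = - deriv f x := by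
    intro x
    have h1 : (fun y => f (-y)) = f := funext hf_even
    have h2 := deriv_comp_neg (f := f) x
    rw [h1] at h2
    linarith
  have hg0 : deriv f 0 = 0 := by
    have := hodd 0
    rw [neg_zero] at this
    linarith
  have hT := aux_tangent f hd hg
  constructor
  · intro hmu
    -- basic inequality, with x the equilibrium point
    have key : ∀ V W : ℝ, 0 < V → V ≤ W → ∃ x : ℝ, x ≤ 0 ∧
        deriv f x + deriv f (x + V) + deriv f (x + 2 * W) = 0 ∧
        0 < 2 * f (V / 2) + 2 * f W - f x - f (x + V) - f (x + 2 * W) := by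
      intro V W hV hVW
      have h1 := hmu V (2 * W - V) hV (by linarith)
      have h2 := hVt V (2 * W - V) hV (by linarith)
      unfold mu at h1
      generalize Vt V (2 * W - V) = x at h1 h2
      rw [show x + V + (2 * W - V) = x + 2 * W by ring] at h1 h2
      rw [show (V + (2 * W - V)) / 2 = W by ring] at h1
      refine ⟨x, ?_, h2, h1⟩
      by_contra hx
      push Not at hx
      have a1 := hg hx
      have a2 := hg (show 0 < x + V by linarith)
      have a3 := hg (show 0 < x + 2 * W by linarith)
      linarith
    have hg1 : 0 < deriv f 1 := by
      have := hg (show (0 : ℝ) < 1 by norm_num)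
      linarith
    have hbdd : ∃ B, ∀ v, deriv f v ≤ B := by
      set C := 1 + 2 * f (1 / 2) / deriv f 1 with hC
      refine ⟨2 * deriv f (C + 1), fun v => ?_⟩
      obtain ⟨x, hx0, hx1, hx2⟩ := key 1 (max 1 ((v + C + 1) / 2)) one_pos (le_max_left _ _)
      have hWv : (v + C + 1) / 2 ≤ max 1 ((v + C + 1) / 2) := le_max_right _ _
      generalize max 1 ((v + C + 1) / 2) = W at *
      have b1 : 2 * f W ≤ f x + f (x + 2 * W) := by
        have c1 := hT W (x + 2 * W)
        have c2 := hT W (-x)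
        rw [hf_even] at c2
        nlinarith
      have b2 : f (x + 1) < 2 * f (1 / 2) := by linarith
      have b3 : -(x + 1) ≤ C := by
        have c1 := hT 1 (-(x + 1))
        rw [hf_even] at c1
        have c2 := hf_pos 1
        have c3 : -(x + 1) - 1 ≤ 2 * f (1 / 2) / deriv f 1 := by
          rw [le_div_iff₀ hg1]
          linarith
        linarith
      have d1 := hg.monotone (show -(C + 1) ≤ x by linarith)
      have d2 := hg.monotone (show -(C + 1) ≤ x + 1 by linarith)
      have d3 := hg.monotone (show v ≤ x + 2 * W by linarith)
      rw [hodd] at d1 d2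
      linarith
    obtain ⟨B, hB⟩ := hbdd
    have hbdd : BddAbove (Set.range (deriv f)) := ⟨B, by rintro _ ⟨v, rfl⟩; exact hB v⟩
    have hL := tendsto_atTop_ciSup hg.monotone hbdd
    have hLle : ∀ v, deriv f v ≤ ⨆ i, deriv f i := fun v => le_ciSup hbdd v
    generalize (⨆ i, deriv f i) = L at hL hLle
    have hL0 : 0 < L := lt_of_lt_of_le hg1 (hLle 1)
    obtain ⟨v, hv⟩ := (hL.eventually (lt_mem_nhds (show L / 2 < L by linarith))).exists
    obtain ⟨Vb, hVb⟩ : L / 2 ∈ Set.range (deriv f) :=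
      mem_range_of_exists_le_of_exists_ge hgc ⟨0, by linarith⟩ ⟨v, hv.le⟩
    have hbound : ∀ V W : ℝ, 0 < V → V ≤ W →
        f (2 * W) - 2 * f W ≤ 2 * f (V / 2) - 2 * f Vb + L * Vb + L * V / 2 := by
      intro V W hV hVW
      obtain ⟨x, hx0, hx1, hx2⟩ := key V W hV hVW
      have c1 := hT (-Vb) x
      have c2 := hT (-Vb) (x + V)
      rw [hodd, hf_even, hVb] at c1 c2
      have c3 := hT (2 * W) (x + 2 * W)
      have c4 := mul_nonneg (sub_nonneg.2 (hLle (2 * W))) (neg_nonneg.2 hx0)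
      linarith
    have hbound0 : ∀ W : ℝ, 0 < W → f (2 * W) - 2 * f W ≤ 2 * f 0 - 2 * f Vb + L * Vb := by
      intro W hW
      have hc : Continuous (fun V : ℝ => 2 * f (V / 2) - 2 * f Vb + L * Vb + L * V / 2) := by
        have := hd.continuous
        fun_prop
      have ht : Tendsto (fun V : ℝ => 2 * f (V / 2) - 2 * f Vb + L * Vb + L * V / 2)
          (nhdsWithin 0 (Set.Ioi 0)) (nhds (2 * f 0 - 2 * f Vb + L * Vb)) := by
        have := hc.tendsto 0
        simp only [zero_div, mul_zero, add_zero] at this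
        exact this.mono_left nhdsWithin_le_nhds
      refine ge_of_tendsto ht ?_
      filter_upwards [Ioc_mem_nhdsGT hW] with V hV
      exact hbound V W hV.1 hV.2
    have hφ := aux_phi f hd hg 0
    simp only [add_zero, neg_zero] at hφ
    have hmono : Monotone (fun V : ℝ => f (2 * max V 1) - 2 * f (max V 1)) := by
      intro a b hab
      have h1 : (1 : ℝ) ≤ max a 1 := le_max_right _ _
      have h2 : (1 : ℝ) ≤ max b 1 := le_max_right _ _
      exact hφ.monotoneOn (show (0 : ℝ) ≤ max a 1 by linarith)
        (show (0 : ℝ) ≤ max b 1 by linarith) (max_le_max hab le_rfl)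
    have hbd : BddAbove (Set.range (fun V : ℝ => f (2 * max V 1) - 2 * f (max V 1))) := by
      refine ⟨2 * f 0 - 2 * f Vb + L * Vb, ?_⟩
      rintro _ ⟨V, rfl⟩
      exact hbound0 _ (lt_of_lt_of_le one_pos (le_max_right _ _))
    have hM := tendsto_atTop_ciSup hmono hbd
    generalize (⨆ i : ℝ, (f (2 * max i 1) - 2 * f (max i 1))) = M at hM
    have hM' : Tendsto (fun V : ℝ => f (2 * V) - 2 * f V) atTop (nhds M) := by
      refine hM.congr' ?_
      filter_upwards [eventually_ge_atTop 1] with V hV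
      rw [max_eq_left hV]
    refine ⟨L, M, Vb, hL, hM', hVb, ?_⟩
    have : M ≤ 2 * f 0 - 2 * f Vb + L * Vb := by
      refine le_of_tendsto hM' ?_
      filter_upwards [eventually_gt_atTop 0] with V hV
      exact hbound0 V hV
    linarith
  · rintro ⟨L, M, Vb, hL, hM, hVb, hcond⟩ V₁ V₂ hV₁ hV
    have hV₂ : 0 < V₂ := by linarith
    have hLle : ∀ v, deriv f v ≤ L := fun v => hg.monotone.ge_of_tendsto hL v
    have hg1 : 0 < deriv f 1 := by
      have := hg (show (0 : ℝ) < 1 by norm_num)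
      linarith
    have hL0 : 0 < L := lt_of_lt_of_le hg1 (hLle 1)
    have hVb0 : 0 < Vb := by
      apply hg.lt_iff_lt.1
      linarith
    have hmin : ∀ t, f (Vt V₁ V₂) + f (Vt V₁ V₂ + V₁) + f (Vt V₁ V₂ + V₁ + V₂) ≤
        f t + f (t + V₁) + f (t + V₁ + V₂) := by
      intro t
      have h0 := hVt V₁ V₂ hV₁ hV₂
      generalize Vt V₁ V₂ = x at h0
      have h1 := hT x t
      have h2 := hT (x + V₁) (t + V₁)
      have h3 := hT (x + V₁ + V₂) (t + V₁ + V₂)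
      have h4 : (deriv f x + deriv f (x + V₁) + deriv f (x + V₁ + V₂)) * (t - x) = 0 := by
        rw [h0, zero_mul]
      linarith
    obtain ⟨s, hs⟩ : ∃ s, s = V₁ / 2 := ⟨_, rfl⟩
    obtain ⟨W, hW⟩ : ∃ W, W = (V₁ + V₂) / 2 := ⟨_, rfl⟩
    have e1 : V₁ = 2 * s := by linarith
    have e2 : ∀ t, t + V₁ + V₂ = 2 * W + t := by intro t; linarith
    unfold mu
    rw [← hs, ← hW]
    have hs0 : 0 < s := by linarith
    rcases le_total (Vb + s) W with hc | hc
    · have h1 := hmin (-Vb - s)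
      rw [e2 (-Vb - s)] at h1
      have h2 := aux_lim f hd hg L M (-Vb - s) W hL hM (by linarith)
      rw [show -Vb - s + V₁ = s + -Vb by linarith] at h1
      have h3 := aux_incr f hd hg (-Vb) 0 s (by linarith) hs0.le
      rw [zero_add, hf_even, add_comm (-Vb)] at h3
      have h4 := hT (Vb + s) Vb
      have h5 := mul_le_mul_of_nonneg_right (hLle (Vb + s)) hs0.le
      rw [show -Vb - s = -(Vb + s) by ring, hf_even] at h1
      have h6 := hT 0 s
      rw [hg0] at h6
      rw [show -Vb - s = -(Vb + s) by ring] at h2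
      linarith
    · have h1 := hmin (-W)
      rw [e2 (-W), show 2 * W + -W = W by ring, hf_even] at h1
      have h2 := aux_lim f hd hg L M (-Vb) Vb hL hM (by linarith)
      rw [show 2 * Vb + -Vb = Vb by ring] at h2
      have h6 := hT 0 s
      rw [hg0] at h6
      have h7 : f (-W + V₁) ≤ f Vb := by
        have c1 : 0 ≤ W - V₁ := by linarith
        have c2 := hT (W - V₁) Vb
        have c3 := hg.monotone c1
        rw [hg0] at c3
        have c4 := mul_nonneg c3 (show 0 ≤ Vb - (W - V₁) by linarith)
        rw [show -W + V₁ = -(W - V₁) by ring, hf_even]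
        linarith
      linarith
end

section
/- Let f(V) = |V| + e^{−|V|}. Then f is even, positive, continuously differentiable, and strictly convex; it satisfies L = lim_{V→∞} f'(V) = 1, M = lim_{V→∞} (f(2V) − 2f(V)) = 0, the unique V̄ with f'(V̄) = 1/2 is V̄ = log 2, and 2f(0) − 2f(log 2) + (log 2)·1 − 0 = 1 − log 2 ≥ 0. Consequently, for this density μ(V₁, V₂) > 0 for all 0 < V₁ ≤ V₂, i.e. the blowup time V₀ equals 0. -/
open Filter Set Real

/-- The density f(V) = |V| + e^{−|V|}. -/
noncomputable def fEx17 (V : ℝ) : ℝ := |V| + Real.exp (-|V|)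

/-- The derivative of the density. -/
noncomputable def gEx17 (x : ℝ) : ℝ := Real.exp (min x 0) - Real.exp (-(max x 0))

lemma gEx17_nonneg {x : ℝ} (hx : 0 ≤ x) : gEx17 x = 1 - Real.exp (-x) := by
  simp [gEx17, hx]

lemma gEx17_nonpos {x : ℝ} (hx : x ≤ 0) : gEx17 x = Real.exp x - 1 := by
  simp [gEx17, hx]

lemma fEx17_nonneg {x : ℝ} (hx : 0 ≤ x) : fEx17 x = x + Real.exp (-x) := by
  simp [fEx17, abs_of_nonneg hx]

lemma fEx17_nonpos {x : ℝ} (hx : x ≤ 0) : fEx17 x = -x + Real.exp x := by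
  simp [fEx17, abs_of_nonpos hx]

lemma hasDerivAt_fEx17 (x : ℝ) : HasDerivAt fEx17 (gEx17 x) x := by
  have h1 : HasDerivAt (fun y : ℝ => y + Real.exp (-y)) (1 - Real.exp (-x)) x := by
    have := (hasDerivAt_id x).add ((hasDerivAt_neg x).exp)
    exact this.congr_deriv (by ring)
  have h2 : HasDerivAt (fun y : ℝ => -y + Real.exp y) (Real.exp x - 1) x := by
    have := (hasDerivAt_neg x).add (Real.hasDerivAt_exp x)
    exact this.congr_deriv (by ring)
  rcases lt_trichotomy x 0 with hx | hx | hx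
  · rw [gEx17_nonpos hx.le]
    refine h2.congr_of_eventuallyEq ?_
    filter_upwards [Iio_mem_nhds hx] with y hy
    exact fEx17_nonpos (le_of_lt hy)
  · have a1 : HasDerivWithinAt fEx17 (gEx17 x) (Ici x) x := by
      rw [gEx17_nonneg hx.ge]
      refine h1.hasDerivWithinAt.congr (fun y hy => fEx17_nonneg ?_) (fEx17_nonneg hx.ge)
      rw [hx] at hy; exact hy
    have a2 : HasDerivWithinAt fEx17 (gEx17 x) (Iic x) x := by
      rw [gEx17_nonpos hx.le]
      refine h2.hasDerivWithinAt.congr (fun y hy => fEx17_nonpos ?_) (fEx17_nonpos hx.le)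
      rw [hx] at hy; exact hy
    have := a2.union a1
    rwa [Iic_union_Ici, hasDerivWithinAt_univ] at this
  · rw [gEx17_nonneg hx.le]
    refine h1.congr_of_eventuallyEq ?_
    filter_upwards [Ioi_mem_nhds hx] with y hy
    exact fEx17_nonneg (le_of_lt hy)

lemma deriv_fEx17 : deriv fEx17 = gEx17 := funext fun x => (hasDerivAt_fEx17 x).deriv

lemma strictMono_gEx17 : StrictMono gEx17 := by
  intro x y hxy
  unfold gEx17
  rcases le_total y 0 with hy | hy
  · have hx : x ≤ 0 := hxy.le.trans hy
    simpa [hx, hy] using hxy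
  · rcases le_total x 0 with hx | hx
    · simp only [min_eq_left hx, max_eq_right hx, min_eq_right hy, max_eq_left hy]
      rcases lt_or_eq_of_le hx with h | h
      · have := Real.exp_lt_exp.2 h
        have := Real.exp_le_exp.2 (neg_le_neg hy)
        linarith
      · have := Real.exp_lt_exp.2 (neg_lt_neg hxy)
        subst h; linarith
    · simpa [hx, hy] using hxy

lemma strictConvexOn_fEx17 : StrictConvexOn ℝ Set.univ fEx17 := by
  apply StrictMono.strictConvexOn_univ_of_deriv
  · exact (continuous_iff_continuousAt.2 fun x => (hasDerivAt_fEx17 x).continuousAt)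
  · rw [deriv_fEx17]; exact strictMono_gEx17

lemma tangent_fEx17 (x y : ℝ) : fEx17 x + gEx17 x * (y - x) ≤ fEx17 y := by
  rcases lt_trichotomy x y with h | h | h
  · have := strictConvexOn_fEx17.convexOn.le_slope_of_hasDerivAt (mem_univ x) (mem_univ y) h
      (hasDerivAt_fEx17 x)
    rw [slope_def_field, le_div_iff₀ (by linarith)] at this
    linarith
  · subst h; simp
  · have := strictConvexOn_fEx17.convexOn.slope_le_of_hasDerivAt (mem_univ y) (mem_univ x) h
      (hasDerivAt_fEx17 x)
    rw [slope_def_field, div_le_iff₀ (by linarith)] at this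
    linarith

lemma key_fEx17 {x y : ℝ} (hx : 0 < x) (hxy : x ≤ y) :
    fEx17 (-x) + fEx17 0 + fEx17 y < 2 * fEx17 (x / 2) + 2 * fEx17 ((x + y) / 2) := by
  rw [fEx17_nonpos (by linarith : -x ≤ 0), fEx17_nonneg le_rfl,
    fEx17_nonneg (by linarith : 0 ≤ y), fEx17_nonneg (by linarith : 0 ≤ x / 2),
    fEx17_nonneg (by linarith : 0 ≤ (x + y) / 2)]
  have e1 : Real.exp (-x) = Real.exp (-(x / 2)) ^ 2 := by
    rw [← Real.exp_nat_mul]; congr 1; push_cast; ring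
  have e2 : Real.exp (-y) = Real.exp (-(y / 2)) ^ 2 := by
    rw [← Real.exp_nat_mul]; congr 1; push_cast; ring
  have e3 : Real.exp (-((x + y) / 2)) = Real.exp (-(x / 2)) * Real.exp (-(y / 2)) := by
    rw [← Real.exp_add]; congr 1; ring
  have hp1 : Real.exp (-(x / 2)) < 1 := by rw [← Real.exp_zero]; exact Real.exp_lt_exp.2 (by linarith)
  have hp2 := Real.add_one_le_exp (-(x / 2))
  have hqp : Real.exp (-(y / 2)) ≤ Real.exp (-(x / 2)) := Real.exp_le_exp.2 (by linarith)
  have hq := Real.exp_pos (-(y / 2))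
  rw [e1, e2, e3, neg_zero, Real.exp_zero]
  generalize Real.exp (-(x / 2)) = p at *
  generalize Real.exp (-(y / 2)) = q at *
  have b1 : (1 - p) ^ 2 ≤ 1 - p := by nlinarith
  have b2 : 0 < q * (2 * p - q) := mul_pos hq (by linarith)
  nlinarith

/-- Let f(V) = |V| + e^{−|V|}. Then f is even, positive, continuously
differentiable, and strictly convex; it satisfies L = lim_{V→∞} f'(V) = 1,
M = lim_{V→∞} (f(2V) − 2f(V)) = 0, the unique V̄ with f'(V̄) = 1/2 is V̄ = log 2,
and 2f(0) − 2f(log 2) + (log 2)·1 − 0 = 1 − log 2 ≥ 0. Consequently, for this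
density μ(V₁, V₂) > 0 for all 0 < V₁ ≤ V₂, i.e. the blowup time V₀ equals 0. -/
theorem stmt_17 :
    (∀ x, fEx17 (-x) = fEx17 x) ∧
    (∀ x, 0 < fEx17 x) ∧
    ContDiff ℝ 1 fEx17 ∧
    StrictConvexOn ℝ Set.univ fEx17 ∧
    Tendsto (deriv fEx17) atTop (nhds 1) ∧
    Tendsto (fun V : ℝ => fEx17 (2 * V) - 2 * fEx17 V) atTop (nhds 0) ∧
    (deriv fEx17 (Real.log 2) = 1 / 2 ∧
      ∀ V : ℝ, deriv fEx17 V = 1 / 2 → V = Real.log 2) ∧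
    (2 * fEx17 0 - 2 * fEx17 (Real.log 2) + Real.log 2 * 1 - 0 = 1 - Real.log 2 ∧
      0 ≤ 1 - Real.log 2) ∧
    (∀ Vt : ℝ → ℝ → ℝ,
      (∀ V₁ V₂ : ℝ, 0 < V₁ → 0 < V₂ →
        deriv fEx17 (Vt V₁ V₂) + deriv fEx17 (Vt V₁ V₂ + V₁)
          + deriv fEx17 (Vt V₁ V₂ + V₁ + V₂) = 0) →
      ∀ V₁ V₂ : ℝ, 0 < V₁ → V₁ ≤ V₂ → 0 < mu fEx17 Vt V₁ V₂) := by
  have hl2 : (0 : ℝ) ≤ Real.log 2 := Real.log_nonneg (by norm_num)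
  have hexp : Real.exp (-Real.log 2) = 1 / 2 := by
    rw [Real.exp_neg, Real.exp_log (by norm_num)]; norm_num
  have hd : gEx17 (Real.log 2) = 1 / 2 := by
    rw [gEx17_nonneg hl2, hexp]; norm_num
  have hlim : Tendsto (fun V : ℝ => Real.exp (-V)) atTop (nhds 0) :=
    Real.tendsto_exp_neg_atTop_nhds_zero
  rw [deriv_fEx17]
  refine ⟨fun x => by simp [fEx17], fun x => ?_, ?_, strictConvexOn_fEx17, ?_, ?_,
    ⟨hd, fun V hV => strictMono_gEx17.injective (hV.trans hd.symm)⟩, ⟨?_, ?_⟩, ?_⟩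
  · unfold fEx17; positivity
  · rw [contDiff_one_iff_deriv, deriv_fEx17]
    refine ⟨fun x => (hasDerivAt_fEx17 x).differentiableAt, ?_⟩
    unfold gEx17; fun_prop
  · have h : Tendsto (fun V : ℝ => 1 - Real.exp (-V)) atTop (nhds 1) := by
      simpa using hlim.const_sub 1
    refine h.congr' ?_
    filter_upwards [eventually_ge_atTop 0] with V hV
    exact (gEx17_nonneg hV).symm
  · have h : Tendsto (fun V : ℝ => Real.exp (-V) ^ 2 - 2 * Real.exp (-V)) atTop (nhds 0) := by
      simpa using (hlim.pow 2).sub (hlim.const_mul 2)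
    refine h.congr' ?_
    filter_upwards [eventually_ge_atTop 0] with V hV
    have e : Real.exp (-(2 * V)) = Real.exp (-V) ^ 2 := by
      rw [← Real.exp_nat_mul]; congr 1; push_cast; ring
    rw [fEx17_nonneg hV, fEx17_nonneg (by linarith : 0 ≤ 2 * V), e]
    ring
  · rw [fEx17_nonneg le_rfl, fEx17_nonneg hl2, hexp, neg_zero, Real.exp_zero]
    ring
  · have := Real.log_two_lt_d9
    linarith
  · intro Vt hVt x y hx hxy
    have h0 := hVt x y hx (by linarith)
    have k := key_fEx17 hx hxy
    unfold mu
    generalize Vt x y = v at *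
    have t1 := tangent_fEx17 v (-x)
    have t2 := tangent_fEx17 (v + x) 0
    have t3 := tangent_fEx17 (v + x + y) y
    have : gEx17 v * (-x - v) + gEx17 (v + x) * (0 - (v + x))
        + gEx17 (v + x + y) * (y - (v + x + y)) = 0 := by
      linear_combination (-x - v) * h0
    linarith
end

section
/- The equilibrium point Ṽ(V₁, V₂) is strictly decreasing in each variable: for V₁, V₁', V₂, V₂' > 0, if V₁ < V₁' then Ṽ(V₁', V₂) < Ṽ(V₁, V₂), and if V₂ < V₂' then Ṽ(V₁, V₂') < Ṽ(V₁, V₂). -/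
open Filter Set

/-- The equilibrium point Ṽ(V₁, V₂) is strictly decreasing in each
variable: for V₁, V₁', V₂, V₂' > 0, if V₁ < V₁' then Ṽ(V₁', V₂) < Ṽ(V₁, V₂), and if
V₂ < V₂' then Ṽ(V₁, V₂') < Ṽ(V₁, V₂). -/
theorem stmt_19 (f : ℝ → ℝ)
    (hf_even : ∀ x, f (-x) = f x)
    (hf_conv : StrictConvexOn ℝ Set.univ f)
    (hf_smooth : ContDiff ℝ 1 f)
    (hf_pos : ∀ x, 0 < f x)
    (Vt : ℝ → ℝ → ℝ)
    (hVt : ∀ V₁ V₂ : ℝ, 0 < V₁ → 0 < V₂ →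
      deriv f (Vt V₁ V₂) + deriv f (Vt V₁ V₂ + V₁) + deriv f (Vt V₁ V₂ + V₁ + V₂) = 0) :
    (∀ V₁ V₁' V₂ : ℝ, 0 < V₁ → 0 < V₁' → 0 < V₂ → V₁ < V₁' →
      Vt V₁' V₂ < Vt V₁ V₂) ∧
    (∀ V₁ V₂ V₂' : ℝ, 0 < V₁ → 0 < V₂ → 0 < V₂' → V₂ < V₂' →
      Vt V₁ V₂' < Vt V₁ V₂) := by
  have hd : Differentiable ℝ f := hf_smooth.differentiable (by norm_num)
  have hm : StrictMono (deriv f) := by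
    have h := hf_conv.strictMonoOn_deriv (fun x _ => hd x)
    exact fun x y hxy => h (Set.mem_univ x) (Set.mem_univ y) hxy
  refine ⟨fun V₁ V₁' V₂ h1 h1' h2 hlt => ?_, fun V₁ V₂ V₂' h1 h2 h2' hlt => ?_⟩
  · by_contra! hc
    have e := hVt V₁ V₂ h1 h2
    have e' := hVt V₁' V₂ h1' h2
    have a := hm.monotone hc
    have b := hm (show Vt V₁ V₂ + V₁ < Vt V₁' V₂ + V₁' by linarith)
    have c := hm (show Vt V₁ V₂ + V₁ + V₂ < Vt V₁' V₂ + V₁' + V₂ by linarith)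
    linarith
  · by_contra! hc
    have e := hVt V₁ V₂ h1 h2
    have e' := hVt V₁ V₂' h1 h2'
    have a := hm.monotone hc
    have b := hm.monotone (show Vt V₁ V₂ + V₁ ≤ Vt V₁ V₂' + V₁ by linarith)
    have c := hm (show Vt V₁ V₂ + V₁ + V₂ < Vt V₁ V₂' + V₁ + V₂' by linarith)
    linarith
end
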